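/- arXiv:1804.09449 — 8 statements merged into one kernel-verified Lean document; each statement's English description precedes it below -/
import Mathlib

section
/- Let G be a finite simple graph that is 4-edge-connected, and let e and f be two edges of G. Then G admits a nowhere-zero Z_2^2-flow θ such that θ(e) = θ(f). -/
open SimpleGraph

/-- A proper edge-coloring: distinct edges of `G` sharing an endpoint get different colors. -/
def IsProperEdgeColoring {V C : Type*} (G : SimpleGraph V) (c : Sym2 V → C) : Prop :=
  ∀ e ∈ G.edgeSet, ∀ f ∈ G.edgeSet, e ≠ f → (∃ v : V, v ∈ e ∧ v ∈ f) → c e ≠ c f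

/-- `S_c(v)`: the set of colors appearing on edges incident to `v`. -/
def colorSet {V C : Type*} (G : SimpleGraph V) (c : Sym2 V → C) (v : V) : Set C :=
  c '' G.incidenceSet v

/-- The edge `uv` is poor: exactly 3 colors appear around its endpoints. -/
def IsPoorAt {V C : Type*} (G : SimpleGraph V) (c : Sym2 V → C) (u v : V) : Prop :=
  (colorSet G c u ∪ colorSet G c v).ncard = 3

/-- The edge `uv` is rich: exactly 5 colors appear around its endpoints. -/
def IsRichAt {V C : Type*} (G : SimpleGraph V) (c : Sym2 V → C) (u v : V) : Prop :=
  (colorSet G c u ∪ colorSet G c v).ncard = 5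

/-- A normal edge-coloring: a proper edge-coloring in which every edge is poor or rich. -/
def IsNormalEdgeColoring {V C : Type*} (G : SimpleGraph V) (c : Sym2 V → C) : Prop :=
  IsProperEdgeColoring G c ∧
    ∀ u v : V, G.Adj u v → IsPoorAt G c u v ∨ IsRichAt G c u v

/-- A nowhere-zero flow with values in an additive group `M` (all elements self-inverse in our
applications): nonzero on every edge, and at every vertex the values on incident edges sum to 0. -/
def IsNowhereZeroFlow {V M : Type*} [AddCommMonoid M] (G : SimpleGraph V)
    (θ : Sym2 V → M) : Prop :=
  (∀ e ∈ G.edgeSet, θ e ≠ 0) ∧ ∀ v : V, ∑ᶠ e ∈ G.incidenceSet v, θ e = 0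

/-- `G` is `k`-edge-connected: connected, and still connected after deleting any set of
fewer than `k` edges. -/
def EdgeConnGe {V : Type*} (G : SimpleGraph V) (k : ℕ) : Prop :=
  G.Connected ∧ ∀ s : Set (Sym2 V), s.ncard < k → (G.deleteEdges s).Connected

/-- `G` is cubic: every vertex has degree 3. -/
def IsCubic {V : Type*} (G : SimpleGraph V) : Prop :=
  ∀ v : V, (G.neighborSet v).ncard = 3

/-- `G` is bridgeless: no edge is a bridge. -/
def Bridgeless {V : Type*} (G : SimpleGraph V) : Prop :=
  ∀ e ∈ G.edgeSet, ¬ G.IsBridge e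


def cls {ι : Type*} (c : ι → Option Bool) (b : Bool) : Set ι := {z | c z = some b}

open Classical in
def CStep {ι K M : Type*} [Field K] [AddCommGroup M] [Module K M] (w : ι → M)
    (c c' : ι → Option Bool) : Prop :=
  ∃ x y b, c x = none ∧ c y = some b ∧ w x ∉ Submodule.span K (w '' (cls c b \ {y})) ∧
    c' = Function.update (Function.update c y none) x (some b)

open Classical in
theorem union_lemma {ι K M : Type*} [Fintype ι] [Field K] [AddCommGroup M] [Module K M]
    (w : ι → M) : ∃ (c : ι → Option Bool) (A : Set ι),
      (∀ b, LinearIndepOn K w (cls c b)) ∧ (∀ x, c x = none → x ∈ A) ∧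
      ∀ b, ∀ x ∈ A, w x ∈ Submodule.span K (w '' (cls c b ∩ A)) := by
  let Good : (ι → Option Bool) → Prop := fun c => ∀ b, LinearIndepOn K w (cls c b)
  let N : (ι → Option Bool) → ℕ := fun c => (Finset.univ.filter (fun z => c z = none)).card
  have hex : ∃ c, Good c := ⟨fun _ => none, fun b => by simp [cls]⟩
  obtain ⟨c0, hc0, hmin⟩ : ∃ c0, Good c0 ∧ ∀ c, Good c → N c0 ≤ N c := by
    have hs : (Finset.univ.filter Good).Nonempty := by
      obtain ⟨c, hc⟩ := hex
      exact ⟨c, by simpa using hc⟩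
    obtain ⟨c0, h, h'⟩ := Finset.exists_min_image (Finset.univ.filter Good) N hs
    exact ⟨c0, by simpa using h, fun c hc => h' c (by simpa using hc)⟩
  have hstep : ∀ c c', CStep (K := K) w c c' → Good c → Good c' ∧ N c' = N c := by
    rintro c c' ⟨x, y, b, hx, hy, hxy, rfl⟩ hg
    have hne : x ≠ y := by rintro rfl; simp_all
    constructor
    · intro b'
      by_cases hb : b' = b
      · subst hb
        have : cls (Function.update (Function.update c y none) x (some b')) b'
            = insert x (cls c b' \ {y}) := by
          ext z
          simp only [cls, Set.mem_ofPred_eq, Set.mem_insert_iff, Set.mem_sdiff, Set.mem_singleton_iff, Function.update_apply]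
          by_cases h1 : z = x <;> by_cases h2 : z = y <;> simp_all
        rw [this]
        exact ((hg b').mono Set.sdiff_subset).insert hxy
      · have : cls (Function.update (Function.update c y none) x (some b)) b'
            = cls c b' := by
          ext z
          simp only [cls, Set.mem_ofPred_eq, Function.update_apply]
          by_cases h1 : z = x <;> by_cases h2 : z = y <;> simp_all [eq_comm]
        rw [this]
        exact hg b'
    · have : (Finset.univ.filter (fun z => Function.update (Function.update c y none) x (some b) z = none)) = insert y ((Finset.univ.filter (fun z => c z = none)).erase x) := by
        ext z
        simp only [Finset.mem_filter, Finset.mem_univ, true_and, Function.update_apply, Finset.mem_insert, Finset.mem_erase]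
        by_cases h1 : z = x <;> by_cases h2 : z = y <;> simp_all
      simp only [N]
      rw [this, Finset.card_insert_of_notMem (by simp [hy]), Finset.card_erase_add_one (by simp [hx])]
  let R := Relation.ReflTransGen (CStep (K := K) w) c0
  have hR : ∀ c, R c → Good c ∧ N c = N c0 := by
    intro c hc
    induction hc with
    | refl => exact ⟨hc0, rfl⟩
    | tail _ h ih =>
      obtain ⟨h1, h2⟩ := hstep _ _ h ih.1
      exact ⟨h1, h2.trans ih.2⟩
  let A : Set ι := {x | ∃ c, R c ∧ c x = none}
  have h2 : ∀ c, R c → ∀ x, c x = none → ∀ b, w x ∈ Submodule.span K (w '' cls c b) := by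
    intro c hc x hx b
    by_contra hcon
    obtain ⟨hg, hN⟩ := hR c hc
    have hG' : Good (Function.update c x (some b)) := by
      intro b'
      by_cases hb : b' = b
      · subst hb
        have : cls (Function.update c x (some b')) b' = insert x (cls c b') := by
          ext z
          simp only [cls, Set.mem_ofPred_eq, Set.mem_insert_iff, Function.update_apply]
          by_cases h1 : z = x <;> simp_all
        rw [this]
        exact (hg b').insert hcon
      · have : cls (Function.update c x (some b)) b' = cls c b' := by
          ext z
          simp only [cls, Set.mem_ofPred_eq, Function.update_apply]
          by_cases h1 : z = x <;> simp_all [eq_comm]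
        rw [this]
        exact hg b'
    have h1 := hmin _ hG'
    have : N (Function.update c x (some b)) < N c := by
      apply Finset.card_lt_card
      rw [Finset.ssubset_iff_of_subset]
      · exact ⟨x, by simp [hx], by simp⟩
      · intro z
        simp only [Finset.mem_filter, Finset.mem_univ, true_and, Function.update_apply]
        by_cases h1 : z = x <;> simp_all
    omega
  have h3 : ∀ c, R c → ∀ x, c x = none → ∀ b, w x ∈ Submodule.span K (w '' (cls c b ∩ A)) := by
    intro c hc x hx b
    have hg := (hR c hc).1 b
    obtain ⟨l, hl, hlx⟩ := (Finsupp.mem_span_image_iff_linearCombination K).1 (h2 c hc x hx b)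
    refine (Finsupp.mem_span_image_iff_linearCombination K).2 ⟨l, ?_, hlx⟩
    rw [Finsupp.mem_supported] at hl ⊢
    intro y hy
    have hyc : c y = some b := hl hy
    refine ⟨hyc, Function.update (Function.update c y none) x (some b), ?_, ?_⟩
    · refine Relation.ReflTransGen.tail hc ⟨x, y, b, hx, hyc, ?_, rfl⟩
      intro hmem
      obtain ⟨l', hl', hlx'⟩ := (Finsupp.mem_span_image_iff_linearCombination K).1 hmem
      have hl'2 := (Finsupp.mem_supported _ _).1 hl'
      have : l = l' := by
        refine linearIndepOn_iffₛ.1 hg l hl l' ?_ (hlx.trans hlx'.symm)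
        exact (Finsupp.mem_supported _ _).2 (hl'2.trans Set.sdiff_subset)
      subst this
      exact (hl'2 hy).2 rfl
    · have hne : y ≠ x := by rintro rfl; simp_all
      simp [hne]
  have h4 : ∀ c, R c → ∀ b, Submodule.span K (w '' (cls c b ∩ A)) ≤ Submodule.span K (w '' (cls c0 b ∩ A)) := by
    intro c hc
    induction hc with
    | refl => intro b; exact le_rfl
    | @tail c c' hc h ih =>
      intro b'
      refine le_trans ?_ (ih b')
      obtain ⟨x, y, b, hx, hy, hxy, rfl⟩ := h
      rw [Submodule.span_le]
      rintro _ ⟨z, ⟨hz, hzA⟩, rfl⟩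
      by_cases hzx : z = x
      · subst hzx; exact h3 c hc _ hx b'
      · refine Submodule.subset_span ⟨z, ⟨?_, hzA⟩, rfl⟩
        simp only [cls, Set.mem_ofPred_eq, Function.update_apply, hzx, if_false] at hz ⊢
        by_cases h2 : z = y <;> simp_all
  refine ⟨c0, A, hc0, fun x hx => ⟨c0, Relation.ReflTransGen.refl, hx⟩, ?_⟩
  rintro b x ⟨c, hc, hx⟩
  exact h4 c hc b (h3 c hc x hx b)

theorem cut_ge {V : Type*} [Fintype V] (G : SimpleGraph V) (hG : EdgeConnGe G 4)
    (S : Set V) (a b : V) (ha : a ∈ S) (hb : b ∉ S) :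
    4 ≤ {x | x ∈ G.edgeSet ∧ (∃ u ∈ x, u ∈ S) ∧ ∃ u ∈ x, u ∉ S}.ncard := by
  by_contra hlt
  have hc := hG.2 _ (not_le.1 hlt)
  obtain ⟨p⟩ := hc.preconnected a b
  obtain ⟨d, -, h1, h2⟩ := p.exists_boundary_dart S ha hb
  have := d.adj
  rw [SimpleGraph.deleteEdges_adj] at this
  exact this.2 ⟨this.1, ⟨d.fst, by simp, h1⟩, ⟨d.snd, by simp, h2⟩⟩

open Classical in
theorem cross_ge {V : Type*} [Fintype V] (G H : SimpleGraph V) (hG : EdgeConnGe G 4)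
    (h2 : 2 ≤ Fintype.card H.ConnectedComponent) :
    2 * Fintype.card H.ConnectedComponent ≤
      (Finset.univ.filter (fun x : Sym2 V => x ∈ G.edgeSet ∧
        ∃ u ∈ x, ∃ v ∈ x, H.connectedComponentMk u ≠ H.connectedComponentMk v)).card := by
  set X := (Finset.univ.filter (fun x : Sym2 V => x ∈ G.edgeSet ∧
        ∃ u ∈ x, ∃ v ∈ x, H.connectedComponentMk u ≠ H.connectedComponentMk v)) with hX
  have key := Finset.card_mul_le_card_mul (s := (Finset.univ : Finset H.ConnectedComponent))
    (t := X) (m := 4) (n := 2) (fun q x => ∃ v ∈ x, H.connectedComponentMk v = q) ?_ ?_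
  · rw [Finset.card_univ] at key; omega
  · intro q _
    obtain ⟨a, rfl⟩ := q.exists_rep
    obtain ⟨q', hq'⟩ := Fintype.exists_ne_of_one_lt_card h2 (Quot.mk _ a)
    obtain ⟨b, rfl⟩ := q'.exists_rep
    have := cut_ge G hG {v | H.connectedComponentMk v = H.connectedComponentMk a} a b rfl hq'
    refine this.trans ?_
    rw [← Set.ncard_coe_finset]
    apply Set.ncard_le_ncard _ (Set.toFinite _)
    rintro x ⟨hx, ⟨u, hu, hu'⟩, ⟨v, hv, hv'⟩⟩
    simp only [Finset.bipartiteAbove, hX, Finset.coe_filter, Finset.mem_filter, Finset.mem_univ, true_and]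
    refine ⟨⟨hx, u, hu, v, hv, ?_⟩, u, hu, hu'⟩
    intro h
    exact hv' (h.symm.trans hu')
  · intro x _
    induction x with
    | _ u v =>
    refine le_trans (Finset.card_le_card (t := {H.connectedComponentMk u, H.connectedComponentMk v}) ?_) Finset.card_le_two
    intro q
    simp only [Finset.bipartiteBelow, Finset.mem_filter, Finset.mem_univ, true_and]
    rintro ⟨z, hz, rfl⟩
    rcases Sym2.mem_iff.1 hz with rfl | rfl <;> simp

open Classical in
noncomputable def wt {V : Type*} (x : Sym2 V) : V → ZMod 2 := fun v => if v ∈ x then 1 else 0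

theorem z2_add_self {V : Type*} (a : V → ZMod 2) : a + a = 0 := by
  ext v; exact CharTwo.add_self_eq_zero _

open Classical in
theorem wt_mk {V : Type*} (u v : V) (h : u ≠ v) :
    wt s(u, v) = Pi.single u 1 + Pi.single v 1 := by
  ext z
  simp only [wt, Sym2.mem_iff, Pi.add_apply, Pi.single_apply]
  by_cases h1 : z = u <;> by_cases h2 : z = v <;> simp_all

open Classical in
theorem rank_ge {V : Type*} [Fintype V] (A : Set (Sym2 V)) (H : SimpleGraph V)
    (hH : H = SimpleGraph.fromEdgeSet A) :
    Fintype.card V ≤ Module.finrank (ZMod 2) (Submodule.span (ZMod 2) (wt '' A)) +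
      Fintype.card H.ConnectedComponent := by
  set S := Submodule.span (ZMod 2) (wt '' A) with hS
  have hadj : ∀ u v, H.Reachable u v → (Pi.single u 1 + Pi.single v 1 : V → ZMod 2) ∈ S := by
    rintro u v ⟨p⟩
    induction p with
    | nil => rw [z2_add_self]; exact zero_mem _
    | @cons a b c h p ih =>
      have h1 := h
      rw [hH, SimpleGraph.fromEdgeSet_adj] at h1
      have h2 : (Pi.single a 1 + Pi.single b 1 : V → ZMod 2) ∈ S := by
        rw [← wt_mk a b h1.2]
        exact Submodule.subset_span ⟨_, h1.1, rfl⟩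
      have h3 := add_mem h2 ih
      have : (Pi.single a 1 + Pi.single b 1 + (Pi.single b 1 + Pi.single c 1) : V → ZMod 2)
        = Pi.single a 1 + Pi.single c 1 := by
        rw [add_assoc, ← add_assoc (Pi.single b 1) (Pi.single b 1), z2_add_self, zero_add]
      rwa [this] at h3
  let r : H.ConnectedComponent → (V → ZMod 2) := fun q => Pi.single q.out 1
  have htop : S ⊔ Submodule.span (ZMod 2) (Set.range r) = ⊤ := by
    rw [eq_top_iff, ← (Pi.basisFun (ZMod 2) V).span_eq, Submodule.span_le]
    rintro _ ⟨v, rfl⟩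
    have h1 : H.Reachable v (H.connectedComponentMk v).out := by
      apply SimpleGraph.ConnectedComponent.exact
      exact (Quot.out_eq (H.connectedComponentMk v)).symm
    have h2 := hadj _ _ h1
    have : (Pi.basisFun (ZMod 2) V) v = (Pi.single v 1 + Pi.single (H.connectedComponentMk v).out 1) + r (H.connectedComponentMk v) := by
      simp only [r, Pi.basisFun_apply]
      rw [add_assoc, z2_add_self, add_zero]
    rw [this]
    exact Submodule.add_mem_sup h2 (Submodule.subset_span ⟨_, rfl⟩)
  have h1 := Submodule.finrank_add_le_finrank_add_finrank S (Submodule.span (ZMod 2) (Set.range r))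
  rw [htop, finrank_top, Module.finrank_fintype_fun_eq_card] at h1
  have h2 := finrank_range_le_card (R := ZMod 2) r
  unfold Set.finrank at h2
  omega

def evenSub (V : Type*) [Fintype V] : Submodule (ZMod 2) (V → ZMod 2) :=
  LinearMap.ker (∑ v : V, LinearMap.proj (R := ZMod 2) (φ := fun _ : V => ZMod 2) v)

theorem mem_evenSub {V : Type*} [Fintype V] (a : V → ZMod 2) :
    a ∈ evenSub V ↔ ∑ v, a v = 0 := by
  simp [evenSub, LinearMap.mem_ker]

open Classical in
theorem finrank_evenSub (V : Type*) [Fintype V] [Nonempty V] :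
    Module.finrank (ZMod 2) (evenSub V) + 1 = Fintype.card V := by
  have h := LinearMap.finrank_range_add_finrank_ker (∑ v : V, LinearMap.proj (R := ZMod 2) (φ := fun _ : V => ZMod 2) v)
  rw [LinearMap.range_eq_top.2, finrank_top, Module.finrank_self, Module.finrank_fintype_fun_eq_card] at h
  · rw [← h, add_comm]; rfl
  · intro a
    obtain ⟨v⟩ := ‹Nonempty V›
    exact ⟨Pi.single v a, by simp⟩

open Classical in
theorem wt_mem {V : Type*} [Fintype V] (G : SimpleGraph V) (x : Sym2 V) (hx : x ∈ G.edgeSet) :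
    wt x ∈ evenSub V := by
  induction x with
  | _ u v =>
  rw [mem_evenSub, wt_mk u v (G.ne_of_adj hx)]
  simp only [Pi.add_apply, Finset.sum_add_distrib, Finset.sum_pi_single', Finset.mem_univ, if_true]
  simp [CharTwo.add_self_eq_zero]

open Classical in
theorem trees {V : Type*} [Fintype V] (G : SimpleGraph V)
    (hG : EdgeConnGe G 4) (e f : Sym2 V) :
    ∃ T : Bool → Set (Sym2 V), Disjoint (T true) (T false) ∧ (∀ b, T b ⊆ G.edgeSet) ∧
      (∀ b, e ∉ T b ∧ f ∉ T b) ∧ ∀ b, evenSub V ≤ Submodule.span (ZMod 2) (wt '' T b) := by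
  have : Nonempty V := hG.1.nonempty
  let ι := {x : Sym2 V // x ∈ G.edgeSet ∧ x ≠ e ∧ x ≠ f}
  obtain ⟨c, A, hind, hnone, hspan⟩ := union_lemma (K := ZMod 2) (fun x : ι => wt x.1)
  set w : ι → (V → ZMod 2) := fun x => wt x.1 with hw
  have hle : ∀ b, Submodule.span (ZMod 2) (w '' cls c b) ≤ evenSub V := by
    intro b
    rw [Submodule.span_le]
    rintro _ ⟨x, -, rfl⟩
    exact wt_mem G x.1 x.2.1
  have hfr : ∀ s : Set ι, LinearIndepOn (ZMod 2) w s →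
      Module.finrank (ZMod 2) (Submodule.span (ZMod 2) (w '' s)) = s.ncard := by
    intro s hs
    have := finrank_span_eq_card (R := ZMod 2) (b := fun x : s => w x) hs
    rw [← Nat.card_eq_fintype_card, Nat.card_coe_set_eq] at this
    rw [← this, Set.image_eq_range]
  obtain ⟨H, hH⟩ : ∃ H, H = SimpleGraph.fromEdgeSet (Subtype.val '' A) := ⟨_, rfl⟩
  have hrk := rank_ge (Subtype.val '' A) H hH
  have him : wt '' (Subtype.val '' A) = w '' A := by rw [Set.image_image]
  rw [him] at hrk
  have hA : ∀ b, Module.finrank (ZMod 2) (Submodule.span (ZMod 2) (w '' A)) ≤ (cls c b ∩ A).ncard := by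
    intro b
    rw [← hfr _ ((hind b).mono Set.inter_subset_left)]
    apply Submodule.finrank_mono
    rw [Submodule.span_le]
    rintro _ ⟨x, hx, rfl⟩
    exact hspan b x hx
  have hcard : ∀ b, (cls c b).ncard = (cls c b ∩ A).ncard + (cls c b \ A).ncard := fun b =>
    (Set.ncard_inter_add_ncard_sdiff_eq_ncard _ _ (Set.toFinite _)).symm
  have hout : (cls c true \ A).ncard + (cls c false \ A).ncard = (Aᶜ).ncard := by
    rw [← Set.ncard_union_eq]
    · congr 1
      ext z
      have := hnone z
      simp only [cls, Set.mem_union, Set.mem_sdiff, Set.mem_ofPred_eq, Set.mem_compl_iff]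
      rcases h : c z with _ | _ | _ <;> simp_all
    · rw [Set.disjoint_left]
      rintro z ⟨h1, -⟩ ⟨h2, -⟩
      simp_all [cls]
  have hcross : 2 * Fintype.card H.ConnectedComponent ≤ (Aᶜ).ncard + 2 := by
    by_cases h2 : 2 ≤ Fintype.card H.ConnectedComponent
    · refine (cross_ge G H hG h2).trans ?_
      rw [← Set.ncard_coe_finset]
      have h3 : (Subtype.val '' Aᶜ : Set (Sym2 V)).ncard = (Aᶜ).ncard :=
        Set.ncard_image_of_injective _ Subtype.val_injective
      have h4 : ({e, f} : Set (Sym2 V)).ncard ≤ 2 := by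
        have := Set.ncard_insert_le e {f}
        rwa [Set.ncard_singleton] at this
      have h5 := Set.ncard_union_le (Subtype.val '' Aᶜ : Set (Sym2 V)) {e, f}
      refine le_trans (Set.ncard_le_ncard ?_ (Set.toFinite _)) (h5.trans (by omega))
      intro x hx
      simp only [Finset.coe_filter, Finset.mem_univ, true_and, Set.mem_ofPred_eq] at hx
      obtain ⟨hxG, u, hu, v, hv, huv⟩ := hx
      by_cases hxe : x = e
      · right; simp [hxe]
      by_cases hxf : x = f
      · right; simp [hxf]
      left
      refine ⟨⟨x, hxG, hxe, hxf⟩, ?_, rfl⟩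
      intro hxA
      apply huv
      have hne : u ≠ v := by rintro rfl; exact huv rfl
      have : x = s(u, v) := (Sym2.mem_and_mem_iff hne).1 ⟨hu, hv⟩
      apply SimpleGraph.ConnectedComponent.sound
      apply SimpleGraph.Adj.reachable
      rw [hH, SimpleGraph.fromEdgeSet_adj]
      exact ⟨⟨_, hxA, this⟩, hne⟩
    · omega
  have hfe := finrank_evenSub V
  have hup : ∀ b, (cls c b).ncard + 1 ≤ Fintype.card V := by
    intro b
    rw [← hfr _ (hind b), ← hfe]
    exact Nat.succ_le_succ (Submodule.finrank_mono (hle b))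
  have heq : ∀ b, (cls c b).ncard + 1 = Fintype.card V := by
    have a1 := hup true
    have a2 := hup false
    have a3 := hA true
    have a4 := hA false
    have a5 := hcard true
    have a6 := hcard false
    rintro (_ | _) <;> omega
  refine ⟨fun b => Subtype.val '' cls c b, ?_, ?_, ?_, ?_⟩
  · rw [Set.disjoint_image_iff Subtype.val_injective, Set.disjoint_left]
    intro z h1 h2
    simp_all [cls]
  · rintro b _ ⟨x, -, rfl⟩; exact x.2.1
  · intro b
    constructor
    · rintro ⟨x, -, hx⟩; exact x.2.2.1 hx
    · rintro ⟨x, -, hx⟩; exact x.2.2.2 hx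
  · intro b
    have him : wt '' (Subtype.val '' cls c b) = w '' cls c b := by rw [Set.image_image]
    show _ ≤ Submodule.span (ZMod 2) (wt '' (Subtype.val '' cls c b))
    rw [him]
    refine (Submodule.eq_of_le_of_finrank_eq (hle b) ?_).ge
    rw [hfr _ (hind b)]
    have := heq b
    omega

open Classical in
theorem flow_of_tree {V : Type*} [Fintype V] (G : SimpleGraph V) (T : Set (Sym2 V))
    (hT : T ⊆ G.edgeSet) (hs : evenSub V ≤ Submodule.span (ZMod 2) (wt '' T)) :
    ∃ θ : Sym2 V → ZMod 2, (∀ x ∉ T, θ x = 1) ∧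
      ∀ v, ∑ x ∈ Finset.univ.filter (fun x => x ∈ G.incidenceSet v), θ x = 0 := by
  let a : V → ZMod 2 := ∑ x ∈ Finset.univ.filter (fun x => x ∈ G.edgeSet ∧ x ∉ T), wt x
  have ha : a ∈ evenSub V := Submodule.sum_mem _ fun x hx => wt_mem G x (by simp_all)
  obtain ⟨l, hl, hla⟩ := (Finsupp.mem_span_image_iff_linearCombination (ZMod 2)).1 (hs ha)
  rw [Finsupp.mem_supported] at hl
  have hl0 : ∀ x ∉ T, l x = 0 := fun x hx => by
    by_contra h
    exact hx (hl (by simpa using h))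
  refine ⟨fun x => if x ∈ T then l x else 1, fun x hx => by simp [hx], fun v => ?_⟩
  have e1 : (∑ x, l x • wt x) = a := by
    rw [← hla, Finsupp.linearCombination_apply, Finsupp.sum_fintype _ _ (by simp)]
  have e2 := congrFun e1 v
  have e3 : ∑ x, (l x * wt x v + if (x ∈ G.edgeSet ∧ x ∉ T) then wt x v else 0) = 0 := by
    rw [Finset.sum_add_distrib]
    simp only [a, Finset.sum_apply, Pi.smul_apply, smul_eq_mul] at e2
    rw [Finset.sum_filter] at e2
    rw [e2]
    exact CharTwo.add_self_eq_zero (R := ZMod 2) _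
  rw [← e3, Finset.sum_filter]
  apply Finset.sum_congr rfl
  intro x _
  have hin : x ∈ G.incidenceSet v ↔ x ∈ G.edgeSet ∧ v ∈ x := Iff.rfl
  by_cases h1 : x ∈ T
  · have := hT h1
    by_cases h2 : v ∈ x <;> simp [wt, hin, h1, h2, this]
  · have := hl0 x h1
    by_cases h2 : v ∈ x <;> by_cases h3 : x ∈ G.edgeSet <;> simp [wt, hin, h1, h2, h3, this]

theorem stmt_0 {V : Type*} [Fintype V] (G : SimpleGraph V)
    (hG : EdgeConnGe G 4) (e f : Sym2 V) (he : e ∈ G.edgeSet) (hf : f ∈ G.edgeSet) :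
    ∃ θ : Sym2 V → ZMod 2 × ZMod 2, IsNowhereZeroFlow G θ ∧ θ e = θ f := by

  classical
  obtain ⟨T, hd, hsub, hef, hs⟩ := trees G hG e f
  obtain ⟨θ₁, h1, k1⟩ := flow_of_tree G (T true) (hsub _) (hs _)
  obtain ⟨θ₂, h2, k2⟩ := flow_of_tree G (T false) (hsub _) (hs _)
  refine ⟨fun x => (θ₁ x, θ₂ x), ⟨?_, ?_⟩, ?_⟩
  · intro x _ h0
    rw [Prod.mk_eq_zero] at h0
    by_cases hx : x ∈ T true
    · have := h2 x (Set.disjoint_left.1 hd hx)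
      rw [h0.2] at this
      exact zero_ne_one this
    · have := h1 x hx
      rw [h0.1] at this
      exact zero_ne_one this
  · intro v
    have : G.incidenceSet v = ↑(Finset.univ.filter (fun x => x ∈ G.incidenceSet v)) := by
      ext; simp
    rw [this, finsum_mem_coe_finset]
    ext
    · rw [Prod.fst_sum]; exact k1 v
    · rw [Prod.snd_sum]; exact k2 v
  · simp only [h1 _ (hef true).1, h1 _ (hef true).2, h2 _ (hef false).1, h2 _ (hef false).2]
end

section
/- Let G be a finite simple graph that is 4-edge-connected, let v be a vertex of G, and let e, f, g be three pairwise distinct edges incident to v. Then G admits a nowhere-zero Z_2^2-flow θ such that θ(e) ≠ θ(f) and θ(e) ≠ θ(g). -/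
open SimpleGraph

lemma mem_span_img {ι K M : Type*} [DecidableEq ι] [Field K] [AddCommGroup M] [Module K M]
    {φ : ι → M} {I : Finset ι} {x : M} (h : x ∈ Submodule.span K (φ '' (I : Set ι))) :
    ∃ c : ι → K, ∑ i ∈ I, c i • φ i = x := by
  obtain ⟨c, hc⟩ := (Submodule.mem_span_image_finset_iff_exists_fun K).1 h
  refine ⟨fun i => if h : i ∈ I then c ⟨i, h⟩ else 0, ?_⟩
  rw [← hc, ← Finset.sum_coe_sort]
  simp


section Packing
variable {ι K M : Type*} [DecidableEq ι] [Field K] [AddCommGroup M] [Module K M]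

def PKValid (K : Type*) {ι M : Type*} [DecidableEq ι] [Field K] [AddCommGroup M] [Module K M]
    (φ : ι → M) (E : Finset ι) (P : Bool → Finset ι) : Prop :=
  (∀ i, P i ⊆ E ∧ LinearIndepOn K φ (P i : Set ι)) ∧ Disjoint (P true) (P false)

def PKMax (K : Type*) {ι M : Type*} [DecidableEq ι] [Field K] [AddCommGroup M] [Module K M]
    (φ : ι → M) (E : Finset ι) (P : Bool → Finset ι) : Prop :=
  PKValid K φ E P ∧ ∀ Q, PKValid K φ E Q →
    (Q true).card + (Q false).card ≤ (P true).card + (P false).card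

def PKUncov {ι : Type*} (E : Finset ι) (P : Bool → Finset ι) (x : ι) : Prop :=
  x ∈ E ∧ ∀ i, x ∉ P i

def PKStep (K : Type*) {ι M : Type*} [DecidableEq ι] [Field K] [AddCommGroup M] [Module K M]
    (φ : ι → M) (E : Finset ι) (P Q : Bool → Finset ι) : Prop :=
  ∃ i x y, PKUncov E P x ∧ y ∈ P i ∧ Q = Function.update P i (insert x ((P i).erase y)) ∧
    LinearIndepOn K φ (insert x ((P i).erase y) : Finset ι)

lemma pk_valid_update {φ : ι → M} {E : Finset ι} {P : Bool → Finset ι}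
    (hP : PKValid K φ E P) {i : Bool} {x : ι} (hx : PKUncov E P x) {T : Finset ι}
    (hT : T ⊆ insert x (P i)) (hI : LinearIndepOn K φ (T : Set ι)) :
    PKValid K φ E (Function.update P i T) := by
  obtain ⟨h1, h2⟩ := hP
  obtain ⟨hxE, hx⟩ := hx
  refine ⟨fun j => ?_, ?_⟩
  · by_cases hj : j = i
    · subst hj
      simp only [Function.update_self]
      refine ⟨hT.trans ?_, hI⟩
      exact Finset.insert_subset hxE (h1 j).1
    · simp only [Function.update_of_ne hj]
      exact h1 j
  · rw [Finset.disjoint_left] at h2 ⊢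
    have ht := hx true
    have hf := hx false
    cases i
    · simp only [Function.update_self, ne_eq, Bool.true_eq_false, not_false_eq_true, Function.update_of_ne]
      intro a ha hb
      have := hT hb
      simp only [Finset.mem_insert] at this
      rcases this with rfl | h
      · exact ht ha
      · exact h2 ha h
    · simp only [Function.update_self, ne_eq, Bool.false_eq_true, not_false_eq_true, Function.update_of_ne]
      intro a ha hb
      have := hT ha
      simp only [Finset.mem_insert] at this
      rcases this with rfl | h
      · exact hf hb
      · exact h2 h hb

lemma pk_step_max {φ : ι → M} {E : Finset ι} {P Q : Bool → Finset ι}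
    (hP : PKMax K φ E P) (h : PKStep K φ E P Q) : PKMax K φ E Q := by
  obtain ⟨i, x, y, hx, hy, rfl, hI⟩ := h
  refine ⟨pk_valid_update hP.1 hx (Finset.insert_subset_insert _ (Finset.erase_subset _ _)) hI, ?_⟩
  intro R hR
  have := hP.2 R hR
  have hc : (insert x ((P i).erase y)).card = (P i).card := by
    rw [Finset.card_insert_of_notMem, Finset.card_erase_add_one hy]
    intro h; exact hx.2 i (Finset.mem_of_mem_erase h)
  cases i <;> simpa [Function.update, hc] using this

lemma pk_span {φ : ι → M} {E : Finset ι} {P : Bool → Finset ι}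
    (hP : PKMax K φ E P) {x : ι} (hx : PKUncov E P x) (i : Bool) :
    φ x ∈ Submodule.span K (φ '' (P i : Set ι)) := by
  by_contra hn
  have hI : LinearIndepOn K φ ((insert x (P i) : Finset ι) : Set ι) := by
    rw [Finset.coe_insert]
    exact (hP.1.1 i).2.insert hn
  have := hP.2 _ (pk_valid_update hP.1 hx subset_rfl hI)
  have hc : (insert x (P i)).card = (P i).card + 1 := Finset.card_insert_of_notMem (hx.2 i)
  cases i <;> simp [Function.update, hc] at this

lemma pk_circ {φ : ι → M} {E : Finset ι} {P : Bool → Finset ι}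
    (hP : PKMax K φ E P) {x : ι} (hx : PKUncov E P x) (i : Bool) (S : Set ι)
    (hS : ∀ Q, PKStep K φ E P Q → ∀ y, PKUncov E Q y → y ∈ S) :
    φ x ∈ Submodule.span K (φ '' ((P i : Set ι) ∩ S)) := by
  have hsp := pk_span hP hx i
  obtain ⟨c, hc⟩ := mem_span_img hsp
  rw [← hc]
  refine Submodule.sum_mem _ fun y hy => ?_
  by_cases h0 : c y = 0
  · simp [h0]
  refine Submodule.smul_mem _ _ (Submodule.subset_span ⟨y, ⟨hy, ?_⟩, rfl⟩)
  have hind := (hP.1.1 i).2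
  have hnx : φ x ∉ Submodule.span K (φ '' ((P i).erase y : Set ι)) := by
    intro hmem
    have hyn : φ y ∉ Submodule.span K (φ '' ((P i).erase y : Set ι)) := by
      have := (linearIndepOn_iff_notMem_span.1 hind) y hy
      simpa using this
    apply hyn
    rw [← Finset.add_sum_erase _ _ hy] at hc
    have h2 : ∑ z ∈ (P i).erase y, c z • φ z ∈ Submodule.span K (φ '' ((P i).erase y : Set ι)) :=
      Submodule.sum_mem _ fun z hz => Submodule.smul_mem _ _ (Submodule.subset_span ⟨z, hz, rfl⟩)
    have h3 : c y • φ y ∈ Submodule.span K (φ '' ((P i).erase y : Set ι)) := by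
      rw [eq_sub_of_add_eq hc]
      exact Submodule.sub_mem _ hmem h2
    exact (Submodule.smul_mem_iff _ h0).1 h3
  have hI : LinearIndepOn K φ ((insert x ((P i).erase y) : Finset ι) : Set ι) := by
    rw [Finset.coe_insert]
    refine LinearIndepOn.insert (hind.mono ?_) hnx
    exact_mod_cast Finset.erase_subset _ _
  refine hS _ ⟨i, x, y, hx, hy, rfl, hI⟩ y ⟨(hP.1.1 i).1 hy, fun j => ?_⟩
  have hyx : y ≠ x := by rintro rfl; exact hx.2 i hy
  by_cases hj : j = i
  · subst hj; simp [hyx]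
  · rw [Function.update_of_ne hj]
    have hd := Finset.disjoint_left.1 hP.1.2
    cases i <;> cases j <;> simp_all
    exact fun h => hd h hy

lemma pk_main (K : Type*) {ι M : Type*} [DecidableEq ι] [Field K] [AddCommGroup M] [Module K M]
    (φ : ι → M) (E : Finset ι) : ∃ (P : Bool → Finset ι) (S : Set ι),
    PKValid K φ E P ∧ (∀ x ∈ E, x ∉ S → ∃ i, x ∈ P i) ∧
      ∀ x ∈ S, ∀ i, φ x ∈ Submodule.span K (φ '' ((P i : Set ι) ∩ S)) := by
  obtain ⟨P, hP⟩ : ∃ P, PKMax K φ E P := by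
    have h0 : PKValid K φ E (fun _ => ∅) := by
      refine ⟨fun i => ⟨by simp, by simp⟩, by simp⟩
    let s : Set ℕ := {n | ∃ Q, PKValid K φ E Q ∧ (Q true).card + (Q false).card = n}
    have hb : BddAbove s := by
      refine ⟨E.card + E.card, ?_⟩
      rintro n ⟨Q, hQ, rfl⟩
      exact add_le_add (Finset.card_le_card (hQ.1 _).1) (Finset.card_le_card (hQ.1 _).1)
    have hn : s.Nonempty := ⟨_, _, h0, rfl⟩
    obtain ⟨P, hP, hc⟩ := Nat.sSup_mem hn hb
    refine ⟨P, hP, fun Q hQ => ?_⟩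
    rw [hc]
    exact le_csSup hb ⟨Q, hQ, rfl⟩
  let R := Relation.ReflTransGen (PKStep K φ E)
  let S : Set ι := {x | ∃ Q, R P Q ∧ PKUncov E Q x}
  have hmax : ∀ Q, R P Q → PKMax K φ E Q := by
    intro Q h
    induction h with
    | refl => exact hP
    | tail _ h ih => exact pk_step_max ih h
  have hB : ∀ Q, R P Q → ∀ x, PKUncov E Q x → ∀ i,
      φ x ∈ Submodule.span K (φ '' ((Q i : Set ι) ∩ S)) := by
    intro Q hQ x hx i
    exact pk_circ (hmax Q hQ) hx i S fun Q' h y hy => ⟨Q', hQ.tail h, hy⟩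
  have hC : ∀ Q, R P Q → ∀ i, Submodule.span K (φ '' ((Q i : Set ι) ∩ S)) ≤
      Submodule.span K (φ '' ((P i : Set ι) ∩ S)) := by
    intro Q h
    induction h with
    | refl => exact fun _ => le_rfl
    | @tail Q Q' hQ h ih =>
      intro j
      refine le_trans ?_ (ih j)
      obtain ⟨i, x, y, hx, hy, rfl, hI⟩ := h
      by_cases hj : j = i
      · subst hj
        rw [Submodule.span_le]
        rintro _ ⟨z, ⟨hz, hzS⟩, rfl⟩
        simp only [Function.update_self, Finset.coe_insert, Set.mem_insert_iff] at hz
        rcases hz with rfl | hz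
        · exact hB Q hQ _ hx j
        · exact Submodule.subset_span ⟨z, ⟨Finset.mem_of_mem_erase hz, hzS⟩, rfl⟩
      · rw [Function.update_of_ne hj]
  refine ⟨P, S, hP.1, ?_, ?_⟩
  · intro x hxE hxS
    by_contra! hcon
    exact hxS ⟨P, Relation.ReflTransGen.refl, hxE, hcon⟩
  · rintro x ⟨Q, hQ, hx⟩ i
    exact hC Q hQ i (hB Q hQ x hx i)

end Packing

section Graph
open Classical in
noncomputable def eV {V : Type*} (e : Sym2 V) : V → ZMod 2 := fun v => if v ∈ e then 1 else 0

open Classical in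
lemma eV_mk {V : Type*} {a b : V} (h : a ≠ b) :
    eV s(a, b) = Pi.single a (1 : ZMod 2) - Pi.single b 1 := by
  ext v
  by_cases h1 : v = a <;> by_cases h2 : v = b <;> simp_all [eV, Pi.single_apply]

open Classical in
lemma flow_ext {V : Type*} (E I : Finset (Sym2 V)) (hI : I ⊆ E)
    (hs : ∀ e ∈ E, eV e ∈ Submodule.span (ZMod 2) (eV '' (I : Set (Sym2 V))))
    (a0 : Sym2 V → ZMod 2) : ∃ a : Sym2 V → ZMod 2, (∀ e, e ∉ I → a e = a0 e) ∧
      ∑ e ∈ E, a e • eV e = 0 := by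
  have h : -∑ e ∈ E \ I, a0 e • eV e ∈ Submodule.span (ZMod 2) (eV '' (I : Set (Sym2 V))) := by
    refine Submodule.neg_mem _ (Submodule.sum_mem _ fun e he => Submodule.smul_mem _ _ (hs e ?_))
    exact (Finset.mem_sdiff.1 he).1
  obtain ⟨c, hc⟩ := mem_span_img h
  refine ⟨fun e => if e ∈ I then c e else a0 e, fun e he => by simp [he], ?_⟩
  rw [← Finset.sum_sdiff hI]
  have h1 : ∑ e ∈ E \ I, (if e ∈ I then c e else a0 e) • eV e = ∑ e ∈ E \ I, a0 e • eV e :=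
    Finset.sum_congr rfl fun e he => by rw [if_neg (Finset.mem_sdiff.1 he).2]
  have h2 : ∑ e ∈ I, (if e ∈ I then c e else a0 e) • eV e = ∑ e ∈ I, c e • eV e :=
    Finset.sum_congr rfl fun e he => by rw [if_pos he]
  rw [h1, h2, hc, add_neg_cancel]

open Classical in
lemma flow_pair {V : Type*} [Fintype V] (G : SimpleGraph V) (a b : Sym2 V → ZMod 2)
    (ha : ∑ e ∈ G.edgeFinset, a e • eV e = 0) (hb : ∑ e ∈ G.edgeFinset, b e • eV e = 0) (v : V) :
    ∑ᶠ e ∈ G.incidenceSet v, ((a e, b e) : ZMod 2 × ZMod 2) = 0 := by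
  have key : ∀ c : Sym2 V → ZMod 2, ∑ e ∈ G.edgeFinset, c e • eV e = 0 →
      ∑ e ∈ G.edgeFinset with v ∈ e, c e = 0 := by
    intro c hc
    have := congrFun hc v
    simpa [eV, Finset.sum_filter] using this
  have hset : G.incidenceSet v = ((G.edgeFinset.filter (v ∈ ·) : Finset (Sym2 V)) : Set (Sym2 V)) := by
    ext e; simp [incidenceSet]
  rw [hset, finsum_mem_coe_finset]
  ext
  · simpa [Prod.fst_sum] using key a ha
  · simpa [Prod.snd_sum] using key b hb

open Classical in
lemma cut_ge_s1 {V : Type*} [Fintype V] (G : SimpleGraph V) (hG : EdgeConnGe G 4) (C : Set V)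
    (u w : V) (hu : u ∈ C) (hw : w ∉ C) :
    4 ≤ (G.edgeFinset.filter (fun e => (∃ x ∈ e, x ∈ C) ∧ ∃ y ∈ e, y ∉ C)).card := by
  by_contra! h
  set D := G.edgeFinset.filter (fun e => (∃ x ∈ e, x ∈ C) ∧ ∃ y ∈ e, y ∉ C) with hD
  have hc := hG.2 (D : Set (Sym2 V)) (by rwa [Set.ncard_coe_finset])
  obtain ⟨p⟩ := hc.preconnected u w
  obtain ⟨d, hd, h1, h2⟩ := p.exists_boundary_dart C hu hw
  have := d.adj
  rw [deleteEdges_adj] at this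
  apply this.2
  simp only [hD, Finset.coe_filter, Set.mem_setOf_eq, mem_edgeFinset, mem_edgeSet]
  exact ⟨this.1, ⟨_, by simp, h1⟩, ⟨_, by simp, h2⟩⟩

open Classical in
/-- crossing edges of the components of `H`. -/
lemma crossing_ge {V : Type*} [Fintype V] (G : SimpleGraph V) (hG : EdgeConnGe G 4)
    (H : SimpleGraph V) (h2 : 2 ≤ Nat.card H.ConnectedComponent) :
    2 * Nat.card H.ConnectedComponent ≤
      (G.edgeFinset.filter (fun e => ∃ x ∈ e, ∃ y ∈ e, ¬ H.Reachable x y)).card := by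
  rw [Nat.card_eq_fintype_card] at h2 ⊢
  set X := G.edgeFinset.filter (fun e => ∃ x ∈ e, ∃ y ∈ e, ¬ H.Reachable x y) with hX
  let r : H.ConnectedComponent → Sym2 V → Prop := fun C e =>
    (∃ x ∈ e, H.connectedComponentMk x = C) ∧ ∃ y ∈ e, H.connectedComponentMk y ≠ C
  have hdc := Finset.sum_card_bipartiteAbove_eq_sum_card_bipartiteBelow (s := Finset.univ) (t := X) r
  have hl : Fintype.card H.ConnectedComponent * 4 ≤
      ∑ C : H.ConnectedComponent, (X.bipartiteAbove r C).card := by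
    rw [← smul_eq_mul, ← Finset.card_univ]
    refine Finset.card_nsmul_le_sum _ _ _ fun C _ => ?_
    obtain ⟨D, hDC⟩ := Fintype.exists_ne_of_one_lt_card (by omega) C
    induction C using ConnectedComponent.ind with | _ u => ?_
    induction D using ConnectedComponent.ind with | _ w => ?_
    refine (cut_ge_s1 G hG {x | H.connectedComponentMk x = H.connectedComponentMk u} u w rfl hDC).trans ?_
    refine Finset.card_le_card fun e he => ?_
    simp only [Finset.mem_filter, Set.mem_setOf_eq, Finset.mem_bipartiteAbove, hX, r] at he ⊢
    obtain ⟨heE, ⟨x, hx, hxu⟩, ⟨y, hy, hyu⟩⟩ := he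
    refine ⟨⟨heE, x, hx, y, hy, fun h => hyu ?_⟩, ⟨x, hx, hxu⟩, y, hy, hyu⟩
    rw [← hxu]; exact (ConnectedComponent.sound h).symm
  have hr : ∑ e ∈ X, (Finset.univ.bipartiteBelow r e).card ≤ X.card * 2 := by
    rw [← smul_eq_mul]
    refine Finset.sum_le_card_nsmul _ _ _ fun e _ => ?_
    induction e using Sym2.ind with | _ a b => ?_
    refine le_trans (Finset.card_le_card (t := {H.connectedComponentMk a, H.connectedComponentMk b}) ?_) Finset.card_le_two
    intro C hC
    simp only [Finset.mem_bipartiteBelow, r] at hC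
    obtain ⟨_, ⟨x, hx, rfl⟩, _⟩ := hC
    rcases Sym2.mem_iff.1 hx with rfl | rfl <;> simp
  omega

open Classical in
lemma rank_ge_s1 {V : Type*} [Fintype V] (H : SimpleGraph V)
    (W : Submodule (ZMod 2) (V → ZMod 2)) (hW : ∀ e ∈ H.edgeSet, eV e ∈ W) :
    Fintype.card V ≤ Module.finrank (ZMod 2) W + Nat.card H.ConnectedComponent := by
  rw [Nat.card_eq_fintype_card]
  have hreach : ∀ u w, H.Reachable u w → (Pi.single u (1 : ZMod 2) - Pi.single w 1 : V → ZMod 2) ∈ W := by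
    rintro u w ⟨p⟩
    induction p with
    | nil => simp
    | cons h p ih =>
      have := W.add_mem (hW _ ((mem_edgeSet _).2 h)) ih
      rw [eV_mk h.ne] at this
      simpa using this
  let ψ : H.ConnectedComponent → (V → ZMod 2) := fun C => Pi.single C.out 1
  have htop : W ⊔ Submodule.span (ZMod 2) (Set.range ψ) = ⊤ := by
    rw [eq_top_iff, ← (Pi.basisFun (ZMod 2) V).span_eq, Submodule.span_le]
    rintro _ ⟨v, rfl⟩
    rw [Pi.basisFun_apply]
    have h1 := hreach v (H.connectedComponentMk v).out
      (ConnectedComponent.exact (Quot.out_eq (H.connectedComponentMk v)).symm)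
    have h2 : ψ (H.connectedComponentMk v) ∈ Submodule.span (ZMod 2) (Set.range ψ) :=
      Submodule.subset_span ⟨_, rfl⟩
    have := Submodule.add_mem_sup h1 h2
    simpa [ψ] using this
  have h1 := Submodule.finrank_add_le_finrank_add_finrank W (Submodule.span (ZMod 2) (Set.range ψ))
  rw [htop, finrank_top, Module.finrank_fintype_fun_eq_card] at h1
  have h2 := finrank_range_le_card (R := ZMod 2) ψ
  unfold Set.finrank at h2
  omega

open Classical in
lemma rank_lt {V : Type*} [Fintype V] [Nonempty V] :
    ∃ W : Submodule (ZMod 2) (V → ZMod 2), Module.finrank (ZMod 2) W + 1 ≤ Fintype.card V ∧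
      ∀ (G : SimpleGraph V), ∀ e ∈ G.edgeSet, eV e ∈ W := by
  let s : (V → ZMod 2) →ₗ[ZMod 2] ZMod 2 := ∑ v, LinearMap.proj v
  refine ⟨LinearMap.ker s, ?_, ?_⟩
  · have h : LinearMap.ker s < ⊤ := by
      rw [lt_top_iff_ne_top, Ne, LinearMap.ker_eq_top]
      intro h
      have := LinearMap.congr_fun h (Pi.single (Classical.arbitrary V) 1)
      simp [s] at this
    have := Submodule.finrank_lt h.ne
    rwa [Module.finrank_fintype_fun_eq_card] at this
  · intro G e he
    induction e using Sym2.ind with | _ a b => ?_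
    rw [eV_mk (G.ne_of_adj he)]
    simp [s]

open Classical in
lemma two_span {V : Type*} [Fintype V] (G : SimpleGraph V) (hG : EdgeConnGe G 4)
    (f g : Sym2 V) : ∃ P : Bool → Finset (Sym2 V), Disjoint (P true) (P false) ∧
      ∀ i, P i ⊆ G.edgeFinset ∧ f ∉ P i ∧ g ∉ P i ∧
        ∀ e ∈ G.edgeFinset, eV e ∈ Submodule.span (ZMod 2) (eV '' (P i : Set (Sym2 V))) := by
  have := hG.1.nonempty
  obtain ⟨P, S, ⟨hv, hd⟩, hcov, hS⟩ := pk_main (ZMod 2) (eV (V := V)) (G.edgeFinset \ {f, g})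
  obtain ⟨W, hW1, hW2⟩ := rank_lt (V := V)
  have hle : ∀ i, Submodule.span (ZMod 2) (eV '' (P i : Set (Sym2 V))) ≤ W := by
    intro i
    rw [Submodule.span_le]
    rintro _ ⟨e, he, rfl⟩
    exact hW2 G e (mem_edgeFinset.1 (Finset.mem_sdiff.1 ((hv i).1 he)).1)
  have hfr : ∀ T : Finset (Sym2 V), LinearIndepOn (ZMod 2) eV (T : Set (Sym2 V)) →
      Module.finrank (ZMod 2) (Submodule.span (ZMod 2) (eV '' (T : Set (Sym2 V)))) = T.card := by
    intro T hT
    have := finrank_span_eq_card hT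
    rw [← Set.image_eq_range] at this
    simpa using this
  have hcle : ∀ i, (P i).card ≤ Module.finrank (ZMod 2) W := by
    intro i
    rw [← hfr _ (hv i).2]
    exact Submodule.finrank_mono (hle i)
  -- counting
  obtain ⟨H, hH⟩ : ∃ H, H = fromEdgeSet S := ⟨_, rfl⟩
  obtain ⟨c, hc⟩ : ∃ c, c = Nat.card H.ConnectedComponent := ⟨_, rfl⟩
  have hk : ∀ i, Fintype.card V ≤ ((P i).filter (· ∈ S)).card + c := by
    intro i
    have h1 := rank_ge_s1 H (Submodule.span (ZMod 2) (eV '' ((P i : Set (Sym2 V)) ∩ S))) (by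
      intro e he
      refine hS e ?_ i
      rw [hH, edgeSet_fromEdgeSet] at he
      exact he.1)
    have h2 : ((P i : Set (Sym2 V)) ∩ S) = (((P i).filter (· ∈ S) : Finset (Sym2 V)) : Set (Sym2 V)) := by
      ext; simp
    rw [h2, hfr, ← hc] at h1
    · exact h1
    · exact (hv i).2.mono (by exact_mod_cast Finset.filter_subset _ _)
  have hsplit : ∀ i, ((P i).filter (· ∈ S)).card + ((P i).filter (· ∉ S)).card = (P i).card :=
    fun i => Finset.card_filter_add_card_filter_not _
  have hcpos : 1 ≤ c := by
    have : Nonempty H.ConnectedComponent := ⟨H.connectedComponentMk (Classical.arbitrary V)⟩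
    rw [hc]
    exact Nat.card_pos
  have hcross : 2 * c ≤ ((P true).filter (· ∉ S)).card + ((P false).filter (· ∉ S)).card + 2 := by
    by_cases h2 : 2 ≤ c
    · rw [hc] at h2 ⊢
      refine (crossing_ge G hG H h2).trans ?_
      set X := G.edgeFinset.filter (fun e => ∃ x ∈ e, ∃ y ∈ e, ¬ H.Reachable x y) with hX
      have hsub : X ⊆ ((P true).filter (· ∉ S) ∪ (P false).filter (· ∉ S)) ∪ {f, g} := by
        intro e he
        by_cases hfg : e ∈ ({f, g} : Finset (Sym2 V))
        · exact Finset.mem_union_right _ hfg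
        refine Finset.mem_union_left _ ?_
        simp only [hX, Finset.mem_filter] at he
        obtain ⟨heE, x, hx, y, hy, hxy⟩ := he
        have heS : e ∉ S := by
          intro hes
          have hne : x ≠ y := by rintro rfl; exact hxy (Reachable.refl _)
          have : e = s(x, y) := (Sym2.mem_and_mem_iff hne).1 ⟨hx, hy⟩
          subst this
          refine hxy (Adj.reachable ?_)
          rw [hH]
          exact (fromEdgeSet_adj S).2 ⟨hes, hne⟩
        obtain ⟨i, hi⟩ := hcov e (Finset.mem_sdiff.2 ⟨heE, hfg⟩) heS
        cases i <;> simp [hi, heS]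
      refine (Finset.card_le_card hsub).trans ?_
      refine (Finset.card_union_le _ _).trans ?_
      exact add_le_add (Finset.card_union_le _ _) Finset.card_le_two
    · omega
  have hcard : ∀ i, (P i).card = Module.finrank (ZMod 2) W := by
    have := hcle true; have := hcle false
    have := hk true; have := hk false
    have := hsplit true; have := hsplit false
    intro i; cases i <;> omega
  refine ⟨P, hd, fun i => ⟨fun e he => (Finset.mem_sdiff.1 ((hv i).1 he)).1, ?_, ?_, ?_⟩⟩
  · intro h; have := (hv i).1 h; simp at this
  · intro h; have := (hv i).1 h; simp at this
  · have heq : Submodule.span (ZMod 2) (eV '' (P i : Set (Sym2 V))) = W := by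
      refine Submodule.eq_of_le_of_finrank_eq (hle i) ?_
      rw [hfr _ (hv i).2, hcard]
    intro e he
    rw [heq]
    exact hW2 G e (mem_edgeFinset.1 he)

end Graph

theorem stmt_1 {V : Type*} [Fintype V] (G : SimpleGraph V)
    (hG : EdgeConnGe G 4) (v : V) (e f g : Sym2 V)
    (he : e ∈ G.incidenceSet v) (hf : f ∈ G.incidenceSet v) (hg : g ∈ G.incidenceSet v)
    (hef : e ≠ f) (heg : e ≠ g) (hfg : f ≠ g) :
    ∃ θ : Sym2 V → ZMod 2 × ZMod 2, IsNowhereZeroFlow G θ ∧ θ e ≠ θ f ∧ θ e ≠ θ g := by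
  classical
  obtain ⟨P, hd, hP⟩ := two_span G hG f g
  have main : ∀ i : Bool, e ∉ P i → ∃ θ : Sym2 V → ZMod 2 × ZMod 2,
      IsNowhereZeroFlow G θ ∧ θ e ≠ θ f ∧ θ e ≠ θ g := by
    intro i hei
    obtain ⟨hI, hfi, hgi, hsi⟩ := hP i
    obtain ⟨hJ, hfj, hgj, hsj⟩ := hP (!i)
    obtain ⟨a, ha0, ha⟩ := flow_ext _ _ hI hsi (fun x => if x = f ∨ x = g then 0 else 1)
    obtain ⟨b, hb0, hb⟩ := flow_ext _ _ hJ hsj (fun _ => 1)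
    have hdis : ∀ x, x ∈ P i → x ∉ P (!i) := by
      have hd' := Finset.disjoint_left.1 hd
      intro x h1 h2
      cases i
      · exact hd' h2 h1
      · exact hd' h1 h2
    have hae : a e = 1 := by rw [ha0 e hei]; simp [hef, heg]
    have haf : a f = 0 := by rw [ha0 f hfi]; simp
    have hag : a g = 0 := by rw [ha0 g hgi]; simp
    refine ⟨fun x => (a x, b x), ⟨fun x _ hx => ?_, fun w => flow_pair G a b ha hb w⟩, ?_, ?_⟩
    · have hxa : a x = 0 := congrArg Prod.fst hx
      have hxb : b x = 0 := congrArg Prod.snd hx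
      by_cases hxj : x ∈ P (!i)
      · have hxi : x ∉ P i := fun h => hdis x h hxj
        rw [ha0 x hxi] at hxa
        split_ifs at hxa with h
        · rcases h with rfl | rfl
          · exact hfj hxj
          · exact hgj hxj
        · exact one_ne_zero hxa
      · rw [hb0 x hxj] at hxb
        exact one_ne_zero hxb
    · intro h
      have := congrArg Prod.fst h
      simp [hae, haf] at this
    · intro h
      have := congrArg Prod.fst h
      simp [hae, hag] at this
  by_cases h : e ∈ P true
  · exact main false (Finset.disjoint_left.1 hd h)
  · exact main true h
end

section
/- Let G be a finite simple graph that is 4-edge-connected, and let e and f be two distinct edges incident to the same vertex v. Then G admits a nowhere-zero Z_2^2-flow θ such that θ(e) ≠ θ(f). -/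
open SimpleGraph

lemma pack_aux {α : Type*} [DecidableEq α] (r : Finset α → ℤ)
    (mono : ∀ P Q, P ⊆ Q → r P ≤ r Q)
    (sub : ∀ P Q, r (P ∪ Q) + r (P ∩ Q) ≤ r P + r Q) (d : ℤ) (S : Finset α) :
    ∀ A B : Finset α, Disjoint S A → Disjoint S B → Disjoint A B →
    (∀ X ⊆ S, 2 * d - r (X ∪ A) - r (X ∪ B) ≤ ((S \ X).card : ℤ)) →
    ∃ A' B' : Finset α, A' ⊆ A ∪ S ∧ B' ⊆ B ∪ S ∧ Disjoint A' B' ∧ 2 * d ≤ r A' + r B' := by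
  induction S using Finset.induction_on with
  | empty =>
    intro A B _ _ h H
    refine ⟨A, B, by simp, by simp, h, ?_⟩
    have := H ∅ (by simp)
    simp at this
    linarith
  | insert e S he ih =>
    intro A B hA hB hAB H
    rw [Finset.disjoint_insert_left] at hA hB
    by_cases h1 : ∀ X ⊆ S, 2 * d - r (X ∪ insert e A) - r (X ∪ B) ≤ ((S \ X).card : ℤ)
    · obtain ⟨A', B', h⟩ := ih (insert e A) B
        (by rw [Finset.disjoint_insert_right]; exact ⟨he, hA.2⟩) hB.2
        (by rw [Finset.disjoint_insert_left]; exact ⟨hB.1, hAB⟩) h1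
      refine ⟨A', B', h.1.trans ?_, h.2.1.trans ?_, h.2.2⟩ <;> intro x <;> simp <;> tauto
    by_cases h2 : ∀ X ⊆ S, 2 * d - r (X ∪ A) - r (X ∪ insert e B) ≤ ((S \ X).card : ℤ)
    · obtain ⟨A', B', h⟩ := ih A (insert e B) hA.2
        (by rw [Finset.disjoint_insert_right]; exact ⟨he, hB.2⟩)
        (by rw [Finset.disjoint_insert_right]; exact ⟨hA.1, hAB⟩) h2
      refine ⟨A', B', h.1.trans ?_, h.2.1.trans ?_, h.2.2⟩ <;> intro x <;> simp <;> tauto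
    exfalso
    push Not at h1 h2
    obtain ⟨X, hX, h1⟩ := h1
    obtain ⟨Y, hY, h2⟩ := h2
    have k1 := H (insert e (X ∪ Y)) (Finset.insert_subset_insert _ (Finset.union_subset hX hY))
    have k2 := H (X ∩ Y) ((Finset.inter_subset_left.trans hX).trans (Finset.subset_insert _ _))
    have s1 := sub (X ∪ insert e A) (Y ∪ A)
    have s2 := sub (X ∪ B) (Y ∪ insert e B)
    have e1 : X ∪ insert e A ∪ (Y ∪ A) = insert e (X ∪ Y) ∪ A := by ext; simp; tauto
    have e2 : X ∪ B ∪ (Y ∪ insert e B) = insert e (X ∪ Y) ∪ B := by ext; simp; tauto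
    have m1 := mono ((X ∩ Y) ∪ A) ((X ∪ insert e A) ∩ (Y ∪ A)) (by intro x; simp; tauto)
    have m2 := mono ((X ∩ Y) ∪ B) ((X ∪ B) ∩ (Y ∪ insert e B)) (by intro x; simp; tauto)
    rw [e1] at s1
    rw [e2] at s2
    have c1 : insert e S \ insert e (X ∪ Y) = S \ (X ∪ Y) := by
      ext x; simp only [Finset.mem_sdiff, Finset.mem_insert]
      by_cases hx : x = e
      · subst hx; simp [he]
      · simp [hx]
    have c2 : insert e S \ (X ∩ Y) = insert e (S \ (X ∩ Y)) := by
      ext x; simp only [Finset.mem_sdiff, Finset.mem_insert, Finset.mem_inter]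
      by_cases hx : x = e
      · subst hx
        have : x ∉ X := fun h => he (hX h)
        simp [this]
      · simp [hx]
    rw [c1] at k1
    rw [c2, Finset.card_insert_of_notMem (by simp [he])] at k2
    have c3 : (S \ (X ∪ Y)).card + (S \ (X ∩ Y)).card = (S \ X).card + (S \ Y).card := by
      have i1 : S \ X ∪ S \ Y = S \ (X ∩ Y) := by ext; simp; tauto
      have i2 : (S \ X) ∩ (S \ Y) = S \ (X ∪ Y) := by ext; simp; tauto
      rw [← Finset.card_union_add_card_inter (S \ X) (S \ Y), i1, i2, add_comm]
    push_cast at k2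
    have c3' : ((S \ (X ∪ Y)).card : ℤ) + (S \ (X ∩ Y)).card = (S \ X).card + (S \ Y).card := by
      exact_mod_cast c3
    linarith

section
open Classical

/-- boundary vector of an edge -/
noncomputable def bdv {V : Type*} (e : Sym2 V) : V → ZMod 2 := fun v => if v ∈ e then 1 else 0

/-- span of boundary vectors -/
noncomputable def Wsp {V : Type*} (X : Finset (Sym2 V)) : Submodule (ZMod 2) (V → ZMod 2) :=
  Submodule.span (ZMod 2) (bdv '' (X : Set (Sym2 V)))

lemma Wsp_mono {V : Type*} {P Q : Finset (Sym2 V)} (h : P ⊆ Q) : Wsp P ≤ Wsp Q :=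
  Submodule.span_mono (Set.image_mono (by exact_mod_cast h))

lemma bdv_eq {V : Type*} {u w : V} (h : u ≠ w) :
    bdv s(u, w) = (Pi.single u 1 - Pi.single w 1 : V → ZMod 2) := by
  funext v
  simp only [bdv, Sym2.mem_iff, Pi.sub_apply, Pi.single_apply]
  have := ZMod.neg_eq_self_mod_two (1 : ZMod 2)
  by_cases h1 : v = u
  · subst h1; simp [h]
  · by_cases h2 : v = w
    · subst h2; simp [h1, this]
    · simp [h1, h2]

lemma reach_mem {V : Type*} (X : Finset (Sym2 V)) {u w : V}
    (h : (SimpleGraph.fromEdgeSet (X : Set (Sym2 V))).Reachable u w) :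
    (Pi.single u 1 - Pi.single w 1 : V → ZMod 2) ∈ Wsp X := by
  obtain ⟨p⟩ := h
  induction p with
  | nil => simp
  | cons h p ih =>
    rw [SimpleGraph.fromEdgeSet_adj] at h
    have h1 := Submodule.subset_span (R := ZMod 2) (Set.mem_image_of_mem bdv h.1)
    rw [bdv_eq h.2] at h1
    have := Submodule.add_mem _ h1 ih
    simpa [Wsp] using this

lemma ker_le {V : Type*} [Fintype V] (X : Finset (Sym2 V)) :
    Fintype.card V ≤ Module.finrank (ZMod 2) (Wsp X) +
      Nat.card (SimpleGraph.fromEdgeSet (X : Set (Sym2 V))).ConnectedComponent := by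
  generalize hH : SimpleGraph.fromEdgeSet (X : Set (Sym2 V)) = H
  rw [Nat.card_eq_fintype_card]
  let π : (V → ZMod 2) →ₗ[ZMod 2] (H.ConnectedComponent → ZMod 2) :=
    { toFun := fun g c => ∑ v, if H.connectedComponentMk v = c then g v else 0
      map_add' := by
        intro g h; funext c
        simp only [Pi.add_apply, ← Finset.sum_add_distrib]
        refine Finset.sum_congr rfl fun v _ => ?_
        split_ifs <;> simp
      map_smul' := by
        intro a g; funext c
        simp [Finset.mul_sum] }
  have hk : LinearMap.ker π ≤ Wsp X := by
    intro g hg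
    have hg' : ∀ c, (∑ v, if H.connectedComponentMk v = c then g v else 0) = 0 :=
      fun c => congrFun (LinearMap.mem_ker.1 hg) c
    let rep : V → V := fun v => (H.connectedComponentMk v).out
    have hrep : ∀ v, H.Reachable v (rep v) := fun v => by
      have : H.connectedComponentMk (rep v) = H.connectedComponentMk v := Quot.out_eq _
      exact (SimpleGraph.ConnectedComponent.exact this).symm
    have key : g = ∑ v, g v • (Pi.single v 1 - Pi.single (rep v) 1 : V → ZMod 2) := by
      have z : ∑ v, g v • (Pi.single (rep v) 1 : V → ZMod 2) = 0 := by
        calc _ = ∑ v, ∑ c : H.ConnectedComponent, (if H.connectedComponentMk v = c then g v else 0) •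
              (Pi.single c.out 1 : V → ZMod 2) := by
              refine Finset.sum_congr rfl fun v _ => ?_
              rw [Finset.sum_eq_single (H.connectedComponentMk v)]
              · simp [rep]
              · intro c _ hc; simp [hc.symm]
              · simp
          _ = 0 := by
              rw [Finset.sum_comm]
              refine Finset.sum_eq_zero fun c _ => ?_
              rw [← Finset.sum_smul, hg' c, zero_smul]
      simp only [smul_sub, Finset.sum_sub_distrib, z, sub_zero]
      funext w
      simp [Finset.sum_apply, Pi.single_apply]
    rw [key]
    exact Submodule.sum_mem _ fun v _ => Submodule.smul_mem _ _ (reach_mem X (hH ▸ hrep v))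
  have h1 := LinearMap.finrank_range_add_finrank_ker π
  have h2 : Module.finrank (ZMod 2) (LinearMap.range π) ≤ _ := Submodule.finrank_le _
  have h3 := Submodule.finrank_mono hk
  rw [Module.finrank_fintype_fun_eq_card] at h1 h2
  omega

/-- even vectors -/
noncomputable def Evn (V : Type*) [Fintype V] : Submodule (ZMod 2) (V → ZMod 2) :=
  LinearMap.ker (∑ v, LinearMap.proj v : (V → ZMod 2) →ₗ[ZMod 2] ZMod 2)

lemma mem_Evn {V : Type*} [Fintype V] (g : V → ZMod 2) : g ∈ Evn V ↔ ∑ v, g v = 0 := by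
  simp [Evn, LinearMap.mem_ker, LinearMap.sum_apply]

lemma finrank_Evn {V : Type*} [Fintype V] [Nonempty V] :
    Module.finrank (ZMod 2) (Evn V) < Fintype.card V := by
  rw [← Module.finrank_fintype_fun_eq_card (R := ZMod 2)]
  apply Submodule.finrank_lt
  intro h
  obtain ⟨v⟩ := ‹Nonempty V›
  have : (Pi.single v 1 : V → ZMod 2) ∈ Evn V := h ▸ Submodule.mem_top
  rw [mem_Evn] at this
  simp at this

lemma bdv_even {V : Type*} [Fintype V] (G : SimpleGraph V) {e : Sym2 V} (he : e ∈ G.edgeSet) :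
    bdv e ∈ Evn V := by
  induction e with | _ u w
  rw [bdv_eq (G.ne_of_adj he), mem_Evn]
  simp

lemma Wsp_even {V : Type*} [Fintype V] (G : SimpleGraph V) (X : Finset (Sym2 V))
    (h : X ⊆ G.edgeFinset) : Wsp X ≤ Evn V := by
  rw [Wsp, Submodule.span_le]
  rintro _ ⟨e, he, rfl⟩
  exact bdv_even G (SimpleGraph.mem_edgeFinset.1 (h he))

lemma cut_count {V : Type*} [Fintype V] (G : SimpleGraph V) (hG : EdgeConnGe G 4)
    (e f : Sym2 V) (X : Finset (Sym2 V)) :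
    2 * (Nat.card (SimpleGraph.fromEdgeSet (X : Set (Sym2 V))).ConnectedComponent : ℤ) - 2 ≤
      (((G.edgeFinset \ {e, f}) \ X).card : ℤ) := by
  generalize hH : SimpleGraph.fromEdgeSet (X : Set (Sym2 V)) = H
  rw [Nat.card_eq_fintype_card]
  by_cases hc : Fintype.card H.ConnectedComponent ≤ 1
  · have : (Fintype.card H.ConnectedComponent : ℤ) ≤ 1 := by exact_mod_cast hc
    linarith [Int.natCast_nonneg ((G.edgeFinset \ {e, f}) \ X).card]
  push Not at hc
  let R : H.ConnectedComponent → Sym2 V → Prop := fun c a =>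
    ∃ u w, a = s(u, w) ∧ G.Adj u w ∧ H.connectedComponentMk u = c ∧ H.connectedComponentMk w ≠ c
  have hR1 : ∀ c, 4 ≤ (G.edgeFinset.filter (R c)).card := by
    intro c
    by_contra! hlt
    have hcon := hG.2 (G.edgeFinset.filter (R c) : Finset (Sym2 V)) (by
      rw [Set.ncard_coe_finset]; exact hlt)
    obtain ⟨c', hc'⟩ := Fintype.exists_ne_of_one_lt_card hc c
    obtain ⟨u, rfl⟩ := c.exists_rep
    obtain ⟨w, rfl⟩ := c'.exists_rep
    obtain ⟨p⟩ := hcon.preconnected u w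
    have : ∀ x y (p : (G.deleteEdges (G.edgeFinset.filter (R (H.connectedComponentMk u)) :
        Finset (Sym2 V))).Walk x y), H.connectedComponentMk x = H.connectedComponentMk u →
        H.connectedComponentMk y = H.connectedComponentMk u := by
      intro x y p
      induction p with
      | nil => exact id
      | cons h p ih =>
        intro hx
        apply ih
        by_contra hy
        rw [SimpleGraph.deleteEdges_adj] at h
        apply h.2
        simp only [Finset.coe_filter, Set.mem_setOf_eq, SimpleGraph.mem_edgeFinset]
        exact ⟨h.1, _, _, rfl, h.1, hx, hy⟩
    exact hc' (this _ _ p rfl)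
  set K := G.edgeFinset.filter (fun a => ∃ c, R c a) with hK
  have hR2 : ∀ a ∈ K, (Finset.univ.filter (fun c => R c a)).card ≤ 2 := by
    intro a _
    induction a with | _ x y
    refine (Finset.card_le_card (t := {H.connectedComponentMk x, H.connectedComponentMk y}) ?_).trans
      Finset.card_le_two
    intro c hc
    simp only [Finset.mem_filter, Finset.mem_univ, true_and] at hc
    obtain ⟨u, w, h, _, h2, _⟩ := hc
    rw [Sym2.eq_iff] at h
    rcases h with ⟨rfl, rfl⟩ | ⟨rfl, rfl⟩ <;> simp [h2]
  have hR3 : ∑ c, (G.edgeFinset.filter (R c)).card =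
      ∑ a ∈ K, (Finset.univ.filter (fun c => R c a)).card := by
    have : ∀ c, G.edgeFinset.filter (R c) = K.filter (R c) := by
      intro c; ext a; simp only [hK, Finset.mem_filter]
      constructor
      · rintro ⟨h1, h2⟩; exact ⟨⟨h1, c, h2⟩, h2⟩
      · rintro ⟨⟨h1, _⟩, h2⟩; exact ⟨h1, h2⟩
    simp only [this]
    exact Finset.sum_card_bipartiteAbove_eq_sum_card_bipartiteBelow R
  have h4 : Fintype.card H.ConnectedComponent * 4 ≤ ∑ c, (G.edgeFinset.filter (R c)).card := by
    have := Finset.card_nsmul_le_sum Finset.univ (fun c => (G.edgeFinset.filter (R c)).card) 4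
      (fun c _ => hR1 c)
    simpa using this
  have h5 : ∑ a ∈ K, (Finset.univ.filter (fun c => R c a)).card ≤ K.card * 2 := by
    simpa using Finset.sum_le_card_nsmul K _ 2 hR2
  have h6 : K \ {e, f} ⊆ (G.edgeFinset \ {e, f}) \ X := by
    intro a ha
    simp only [hK, Finset.mem_sdiff, Finset.mem_filter] at ha ⊢
    obtain ⟨⟨h1, c, u, w, rfl, had, hu, hw⟩, h2⟩ := ha
    refine ⟨⟨h1, h2⟩, fun hx => hw ?_⟩
    rw [← hu]
    apply SimpleGraph.ConnectedComponent.sound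
    apply SimpleGraph.Adj.reachable
    rw [← hH, SimpleGraph.fromEdgeSet_adj]
    exact ⟨by simpa [Sym2.eq_swap] using hx, had.ne'⟩
  have h7 := Finset.card_le_card h6
  have h8 := Finset.le_card_sdiff {e, f} K
  have h9 : ({e, f} : Finset (Sym2 V)).card ≤ 2 := Finset.card_le_two
  omega

lemma extend_flow {V : Type*} [Fintype V] (G : SimpleGraph V) (A : Finset (Sym2 V))
    (hA : A ⊆ G.edgeFinset) (hW : Wsp A = Evn V) (q : Sym2 V → ZMod 2) :
    ∃ φ : Sym2 V → ZMod 2, (∀ a, a ∉ A → φ a = q a) ∧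
      ∀ v, ∑ a ∈ G.edgeFinset, φ a * bdv a v = 0 := by
  have hm : -(∑ a ∈ G.edgeFinset \ A, q a • bdv a) ∈ Wsp A := by
    rw [hW]
    refine Submodule.neg_mem _ (Submodule.sum_mem _ fun a ha => Submodule.smul_mem _ _ ?_)
    exact bdv_even G (SimpleGraph.mem_edgeFinset.1 (Finset.mem_sdiff.1 ha).1)
  rw [Wsp, Submodule.mem_span_image_finset_iff_exists_fun] at hm
  obtain ⟨c', hc'⟩ := hm
  obtain ⟨c, hc⟩ : ∃ c : Sym2 V → ZMod 2, ∑ a ∈ A, c a • bdv a =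
      -(∑ a ∈ G.edgeFinset \ A, q a • bdv a) := by
    refine ⟨fun a => if h : a ∈ A then c' ⟨a, h⟩ else 0, ?_⟩
    rw [← hc', ← Finset.sum_coe_sort]
    simp
  refine ⟨fun a => if a ∈ A then c a else q a, fun a ha => by simp [ha], fun v => ?_⟩
  rw [← Finset.sum_sdiff hA]
  have h1 : ∑ a ∈ G.edgeFinset \ A, (if a ∈ A then c a else q a) * bdv a v =
      (∑ a ∈ G.edgeFinset \ A, q a • bdv a) v := by
    rw [Finset.sum_apply]
    refine Finset.sum_congr rfl fun a ha => ?_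
    simp [(Finset.mem_sdiff.1 ha).2]
  have h2 : ∑ a ∈ A, (if a ∈ A then c a else q a) * bdv a v = (∑ a ∈ A, c a • bdv a) v := by
    rw [Finset.sum_apply]
    refine Finset.sum_congr rfl fun a ha => ?_
    simp [ha]
  rw [h1, h2, hc, Pi.neg_apply]
  exact add_neg_cancel _

end

theorem stmt_2 {V : Type*} [Fintype V] (G : SimpleGraph V)
    (hG : EdgeConnGe G 4) (v : V) (e f : Sym2 V)
    (he : e ∈ G.incidenceSet v) (hf : f ∈ G.incidenceSet v) (hef : e ≠ f) :
    ∃ θ : Sym2 V → ZMod 2 × ZMod 2, IsNowhereZeroFlow G θ ∧ θ e ≠ θ f := by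
  classical
  have : Nonempty V := ⟨v⟩
  obtain ⟨A, B, hA, hB, hAB, hr⟩ := pack_aux
    (fun X : Finset (Sym2 V) => (Module.finrank (ZMod 2) (Wsp X) : ℤ))
    (fun P Q h => by exact_mod_cast Submodule.finrank_mono (Wsp_mono h))
    (fun P Q => by
      have h1 := Submodule.finrank_sup_add_finrank_inf_eq (Wsp P) (Wsp Q)
      have h2 : Wsp (P ∪ Q) = Wsp P ⊔ Wsp Q := by
        rw [Wsp, Wsp, Wsp, ← Submodule.span_union, ← Set.image_union, Finset.coe_union]
      have h3 : Wsp (P ∩ Q) ≤ Wsp P ⊓ Wsp Q :=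
        le_inf (Wsp_mono Finset.inter_subset_left) (Wsp_mono Finset.inter_subset_right)
      have h4 := Submodule.finrank_mono h3
      rw [h2]
      have : Module.finrank (ZMod 2) ↥(Wsp P ⊔ Wsp Q) + Module.finrank (ZMod 2) (Wsp (P ∩ Q)) ≤
        Module.finrank (ZMod 2) (Wsp P) + Module.finrank (ZMod 2) (Wsp Q) := by omega
      exact_mod_cast this)
    ((Fintype.card V : ℤ) - 1) (G.edgeFinset \ {e, f}) ∅ ∅ (by simp) (by simp) (by simp)
    (fun X hX => by
      have h1 := cut_count G hG e f X
      have h2 := ker_le X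
      rw [Finset.union_empty]
      have h1' : 2 * (Nat.card
        (SimpleGraph.fromEdgeSet (X : Set (Sym2 V))).ConnectedComponent : ℤ) - 2 ≤
        (((G.edgeFinset \ {e, f}) \ X).card : ℤ) := by convert h1
      omega)
  rw [Finset.empty_union] at hA hB
  have hA' := hA.trans Finset.sdiff_subset
  have hB' := hB.trans Finset.sdiff_subset
  have hAE := Wsp_even G A (by convert hA')
  have hBE := Wsp_even G B (by convert hB')
  have hE := finrank_Evn (V := V)
  have a1 := Submodule.finrank_mono hAE
  have b1 := Submodule.finrank_mono hBE
  have hr' : 2 * ((Fintype.card V : ℤ) - 1) ≤ (Module.finrank (ZMod 2) (Wsp A) : ℤ) +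
    (Module.finrank (ZMod 2) (Wsp B) : ℤ) := hr
  have hAeq : Wsp A = Evn V := Submodule.eq_of_le_of_finrank_le hAE (by omega)
  have hBeq : Wsp B = Evn V := Submodule.eq_of_le_of_finrank_le hBE (by omega)
  obtain ⟨φ, hφ, hφ0⟩ := extend_flow G A (by convert hA') hAeq (fun a => if a = f then 0 else 1)
  obtain ⟨ψ, hψ, hψ0⟩ := extend_flow G B (by convert hB') hBeq (fun a => if a = e then 0 else 1)
  have heA : e ∉ A := fun h => by simpa using hA h
  have hfA : f ∉ A := fun h => by simpa using hA h
  have heB : e ∉ B := fun h => by simpa using hB h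
  have hfB : f ∉ B := fun h => by simpa using hB h
  have fl : ∀ (χ : Sym2 V → ZMod 2), (∀ v, ∑ a ∈ G.edgeFinset, χ a * bdv a v = 0) →
      ∀ v, ∑ a ∈ G.incidenceFinset v, χ a = 0 := by
    intro χ h w
    rw [← h w, SimpleGraph.incidenceFinset_eq_filter, Finset.sum_filter]
    refine Finset.sum_congr (by congr) fun a _ => ?_
    simp [bdv]
  refine ⟨fun a => (φ a, ψ a), ⟨?_, ?_⟩, ?_⟩
  · intro a ha h0
    have h1 : φ a = 0 := congrArg Prod.fst h0
    have h2 : ψ a = 0 := congrArg Prod.snd h0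
    by_cases haA : a ∈ A
    · have haB : a ∉ B := Finset.disjoint_left.1 hAB haA
      have hae : a ≠ e := fun h => heA (h ▸ haA)
      rw [hψ a haB] at h2
      simp [hae] at h2
    · rw [hφ a haA] at h1
      have haf : a = f := by
        by_contra h
        simp [h] at h1
      subst haf
      rw [hψ a hfB] at h2
      simp [hef.symm] at h2
  · intro w
    have hs : G.incidenceSet w = (G.incidenceFinset w : Set (Sym2 V)) := by simp
    rw [hs, finsum_mem_coe_finset]
    apply Prod.ext
    · rw [Prod.fst_sum]; exact fl φ (by convert hφ0) w
    · rw [Prod.snd_sum]; exact fl ψ (by convert hψ0) w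
  · intro h
    have h1 : φ e = φ f := congrArg Prod.fst h
    rw [hφ e heA, hφ f hfA] at h1
    simp [hef] at h1
end

section
/- Let G be a finite simple graph that is 4-edge-connected, and let e and f be two edges of G. Then the graph obtained from G by deleting the edges e and f contains two edge-disjoint spanning trees; that is, there exist two spanning subgraphs T_1 and T_2 of G - e - f with disjoint edge sets, each of which is connected and acyclic and contains every vertex of G. -/
open SimpleGraph

section Exchange
variable {K W α ι : Type*} [Field K] [AddCommGroup W] [Module K W]

open Classical in
inductive Reach3 (K : Type*) {W α ι : Type*} [Field K] [AddCommGroup W] [Module K W]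
    (v : α → W) (c0 : α → Option ι) : (α → Option ι) → Prop
  | refl : Reach3 K v c0 c0
  | step (c : α → Option ι) (e g : α) (i : ι) : Reach3 K v c0 c → c e = none → c g = some i →
      v e ∉ Submodule.span K (v '' ({a | c a = some i} \ {g})) →
      Reach3 K v c0 (Function.update (Function.update c e (some i)) g none)

def Good3 (K : Type*) {W α ι : Type*} [Field K] [AddCommGroup W] [Module K W]
    (v : α → W) (c : α → Option ι) : Prop :=
  ∀ i, LinearIndepOn K v {a | c a = some i}

open Classical in
theorem good3_step (v : α → W) (c : α → Option ι) (e g : α) (i : ι) (hc : Good3 K v c)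
    (he : c e = none) (hg : c g = some i)
    (h : v e ∉ Submodule.span K (v '' ({a | c a = some i} \ {g}))) :
    Good3 K v (Function.update (Function.update c e (some i)) g none) := by
  have hne : e ≠ g := by rintro rfl; simp_all
  intro j
  by_cases hj : j = i
  · subst hj
    have : {a | Function.update (Function.update c e (some j)) g none a = some j}
        = insert e ({a | c a = some j} \ {g}) := by
      ext a
      simp only [Function.update_apply, Set.mem_setOf_eq, Set.mem_insert_iff, Set.mem_diff,
        Set.mem_singleton_iff]
      grind
    rw [this, linearIndepOn_insert (by simp [he])]
    exact ⟨(hc j).mono Set.diff_subset, h⟩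
  · refine (hc j).mono ?_
    intro a
    simp only [Function.update_apply, Set.mem_setOf_eq]
    grind

open Classical in
theorem ncard3_step [Finite α] (c : α → Option ι) (e g : α) (i : ι)
    (he : c e = none) (hg : c g = some i) :
    {a | Function.update (Function.update c e (some i)) g none a ≠ none}.ncard
      = {a | c a ≠ none}.ncard := by
  have hne : e ≠ g := by rintro rfl; simp_all
  have : {a | Function.update (Function.update c e (some i)) g none a ≠ none}
        = insert e ({a | c a ≠ none} \ {g}) := by
    ext a
    simp only [Function.update_apply, Set.mem_setOf_eq, Set.mem_insert_iff, Set.mem_diff,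
        Set.mem_singleton_iff]
    grind
  rw [this, Set.ncard_insert_of_notMem (by simp [he]),
    Set.ncard_diff_singleton_add_one (by simp [hg])]

open Classical in
theorem exchange3 [Finite α] [Finite ι] (v : α → W) :
    ∃ (c : α → Option ι) (D : Set α), Good3 K v c ∧ (∀ a, c a = none → a ∈ D) ∧
      ∀ i, ∀ a ∈ D, v a ∈ Submodule.span K (v '' ({a | c a = some i} ∩ D)) := by
  have hne : Nonempty {c : α → Option ι // Good3 K v c} :=
    ⟨⟨fun _ => none, fun i => by simp⟩⟩
  obtain ⟨⟨c0, h0⟩, hmax⟩ := Finite.exists_max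
    (fun c : {c : α → Option ι // Good3 K v c} => {a | c.1 a ≠ none}.ncard)
  have hR : ∀ c, Reach3 K v c0 c →
      Good3 K v c ∧ {a | c a ≠ none}.ncard = {a | c0 a ≠ none}.ncard := by
    intro c hc
    induction hc with
    | refl => exact ⟨h0, rfl⟩
    | step c e g i _ he hg h ih =>
      exact ⟨good3_step v c e g i ih.1 he hg h, (ncard3_step c e g i he hg).trans ih.2⟩
  set D : Set α := {a | ∃ c, Reach3 K v c0 c ∧ c a = none} with hD
  have hspan : ∀ c, Reach3 K v c0 c → ∀ e, c e = none → ∀ i,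
      v e ∈ Submodule.span K (v '' {a | c a = some i}) := by
    intro c hc e he i
    by_contra hcon
    have hg : Good3 K v (Function.update c e (some i)) := by
      intro j
      by_cases hj : j = i
      · subst hj
        have : {a | Function.update c e (some j) a = some j} = insert e {a | c a = some j} := by
          ext a
          simp only [Function.update_apply, Set.mem_setOf_eq, Set.mem_insert_iff]
          grind
        rw [this, linearIndepOn_insert (by simp [he])]
        exact ⟨(hR c hc).1 j, hcon⟩
      · refine ((hR c hc).1 j).mono ?_
        intro a
        simp only [Function.update_apply, Set.mem_setOf_eq]
        grind
    have h1 := hmax ⟨_, hg⟩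
    simp only at h1
    have : {a | Function.update c e (some i) a ≠ none} = insert e {a | c a ≠ none} := by
      ext a
      simp only [Function.update_apply, Set.mem_setOf_eq, Set.mem_insert_iff]
      grind
    rw [this, Set.ncard_insert_of_notMem (by simp [he]), (hR c hc).2] at h1
    omega
  have hspanD : ∀ c, Reach3 K v c0 c → ∀ e, c e = none → ∀ i,
      v e ∈ Submodule.span K (v '' ({a | c a = some i} ∩ D)) := by
    intro c hc e he i
    obtain ⟨l, hl, hle⟩ := (Finsupp.mem_span_image_iff_linearCombination K).1 (hspan c hc e he i)
    refine (Finsupp.mem_span_image_iff_linearCombination K).2 ⟨l, ?_, hle⟩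
    rw [Finsupp.mem_supported] at hl ⊢
    intro g hg
    refine ⟨hl hg, ?_⟩
    have hgi : c g = some i := hl hg
    have hne : e ≠ g := by rintro rfl; simp_all
    refine ⟨_, Reach3.step c e g i hc he hgi ?_, by simp⟩
    intro hcon
    obtain ⟨l', hl', hle'⟩ := (Finsupp.mem_span_image_iff_linearCombination K).1 hcon
    have hz := linearIndepOn_iff.1 ((hR c hc).1 i) (l - l')
      (Submodule.sub_mem _ ((Finsupp.mem_supported _ _).2 hl)
        (Finsupp.supported_mono Set.diff_subset hl')) (by rw [map_sub, hle, hle', sub_self])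
    rw [sub_eq_zero] at hz
    subst hz
    exact (((Finsupp.mem_supported _ _).1 hl') hg).2 rfl
  have hmono : ∀ c, Reach3 K v c0 c → ∀ i, Submodule.span K (v '' ({a | c a = some i} ∩ D)) ≤
      Submodule.span K (v '' ({a | c0 a = some i} ∩ D)) := by
    intro c hc
    induction hc with
    | refl => exact fun i => le_rfl
    | step c e g i hc he hg h ih =>
      intro j
      refine le_trans ?_ (ih j)
      rw [Submodule.span_le]
      rintro _ ⟨a, ⟨ha, haD⟩, rfl⟩
      by_cases hae : a = e
      · subst hae; exact hspanD c hc a he j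
      · refine Submodule.subset_span ⟨a, ⟨?_, haD⟩, rfl⟩
        simp only [Function.update_apply, Set.mem_setOf_eq] at ha ⊢
        grind
  exact ⟨c0, D, h0, fun a ha => ⟨c0, .refl, ha⟩, fun i a ⟨c, hc, hca⟩ =>
    hmono c hc i (hspanD c hc a hca i)⟩

theorem finrank3 [Finite α] (v : α → W) (s : Set α) (h : LinearIndepOn K v s) :
    Module.finrank K (Submodule.span K (v '' s)) = s.ncard := by
  have : Fintype s := Fintype.ofFinite s
  have h2 := finrank_span_eq_card (R := K) (b := fun x : s => v x) h
  rw [← Set.image_eq_range] at h2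
  rw [h2, ← Nat.card_coe_set_eq, Nat.card_eq_fintype_card]

end Exchange

section GraphPart
variable {V : Type*}

def bvec3 (V : Type*) : Sym2 V → Module.Dual (ZMod 2) (V → ZMod 2) :=
  Sym2.lift ⟨fun a b => LinearMap.proj a + LinearMap.proj b, fun a b => add_comm _ _⟩

theorem bvec3_zero (a b : V) (x : V → ZMod 2) : bvec3 V s(a, b) x = 0 ↔ x a = x b := by
  simp only [bvec3, Sym2.lift_mk, LinearMap.add_apply, LinearMap.proj_apply]
  exact CharTwo.add_eq_zero

theorem rank3 [Finite V] (A : SimpleGraph V) :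
    Module.finrank (ZMod 2) (Submodule.span (ZMod 2) (bvec3 V '' A.edgeSet))
      + Nat.card A.ConnectedComponent = Nat.card V := by
  have : Fintype V := Fintype.ofFinite V
  have : Fintype A.ConnectedComponent := Fintype.ofFinite _
  have h := Subspace.finrank_add_finrank_dualCoannihilator_eq
    (Submodule.span (ZMod 2) (bvec3 V '' A.edgeSet))
  rw [Module.finrank_fintype_fun_eq_card] at h
  rw [Nat.card_eq_fintype_card, Nat.card_eq_fintype_card, ← h]
  congr 1
  let L : (A.ConnectedComponent → ZMod 2) →ₗ[ZMod 2] (V → ZMod 2) :=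
    LinearMap.funLeft (ZMod 2) (ZMod 2) A.connectedComponentMk
  have hL : Function.Injective L := by
    apply LinearMap.funLeft_injective_of_surjective
    exact fun C => C.exists_rep
  have hr : LinearMap.range L
      = (Submodule.span (ZMod 2) (bvec3 V '' A.edgeSet)).dualCoannihilator := by
    ext x
    rw [Submodule.mem_dualCoannihilator]
    constructor
    · rintro ⟨y, rfl⟩ φ hφ
      induction hφ using Submodule.span_induction with
      | mem φ h =>
        obtain ⟨e, he, rfl⟩ := h
        induction e with
        | h a b =>
          rw [bvec3_zero]
          have : A.connectedComponentMk a = A.connectedComponentMk b :=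
            ConnectedComponent.sound (Adj.reachable he)
          simp [L, LinearMap.funLeft_apply, this]
      | zero => simp
      | add φ ψ _ _ h1 h2 => simp [h1, h2]
      | smul a φ _ h1 => simp [h1]
    · intro h
      have hadj : ∀ a b, A.Adj a b → x a = x b := fun a b hab =>
        (bvec3_zero a b x).1 (h _ (Submodule.subset_span ⟨s(a, b), hab, rfl⟩))
      have hreach : ∀ a b, ∀ p : A.Walk a b, x a = x b := by
        intro a b p
        induction p with
        | nil => rfl
        | cons hh _ ih => exact (hadj _ _ hh).trans ih
      refine ⟨fun C => C.lift x (fun a b p _ => hreach a b p), ?_⟩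
      ext a
      simp [L, LinearMap.funLeft_apply]
  rw [← hr, LinearMap.finrank_range_of_inj hL, Module.finrank_fintype_fun_eq_card]

open Classical in
theorem cut3 [Finite V] (G : SimpleGraph V) (hG : EdgeConnGe G 4) (A : SimpleGraph V)
    (hA : 2 ≤ Nat.card A.ConnectedComponent) :
    2 * Nat.card A.ConnectedComponent ≤
      {x | x ∈ G.edgeSet ∧ x ∉ A.edgeSet}.ncard := by
  have : Fintype V := Fintype.ofFinite V
  have : Fintype A.ConnectedComponent := Fintype.ofFinite _
  let r : A.ConnectedComponent → Sym2 V → Prop := fun C x =>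
    ∃ a b, x = s(a, b) ∧ A.connectedComponentMk a = C ∧ A.connectedComponentMk b ≠ C
  have key := Finset.card_mul_le_card_mul (s := (Finset.univ : Finset A.ConnectedComponent))
    (t := Finset.univ.filter (fun x => x ∈ G.edgeSet ∧ x ∉ A.edgeSet)) (m := 4) (n := 2) r ?_ ?_
  · have hkey : (Finset.univ.filter (fun x => x ∈ G.edgeSet ∧ x ∉ A.edgeSet)).card
        = {x | x ∈ G.edgeSet ∧ x ∉ A.edgeSet}.ncard := by
      rw [← Set.ncard_coe_finset]; congr 1; ext x; simp
    rw [hkey, Finset.card_univ] at key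
    rw [Nat.card_eq_fintype_card]
    omega
  · intro C _
    by_contra hlt
    have hsub : {x | x ∈ G.edgeSet ∧ r C x}.ncard < 4 := by
      refine lt_of_le_of_lt ?_ (not_le.1 hlt)
      rw [← Set.ncard_coe_finset]
      refine Set.ncard_le_ncard ?_ (Set.toFinite _)
      rintro x ⟨hx, hr⟩
      simp only [Finset.coe_bipartiteAbove, Finset.mem_filter, Finset.mem_univ, true_and,
        Set.mem_setOf_eq]
      refine ⟨⟨hx, ?_⟩, hr⟩
      obtain ⟨a, b, rfl, h1, h2⟩ := hr
      intro hab
      exact h2 (h1 ▸ (ConnectedComponent.sound (Adj.reachable hab)).symm)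
    have hc := hG.2 _ hsub
    have hstay : ∀ a b, ∀ _ : (G.deleteEdges {x | x ∈ G.edgeSet ∧ r C x}).Walk a b,
        A.connectedComponentMk a = C → A.connectedComponentMk b = C := by
      intro a b p
      induction p with
      | nil => exact id
      | cons hh _ ih =>
        rename_i u w _ _
        intro hu
        apply ih
        by_contra hw
        rw [deleteEdges_adj] at hh
        exact hh.2 ⟨hh.1, _, _, rfl, hu, hw⟩
    rw [Nat.card_eq_fintype_card] at hA
    obtain ⟨C', hC'⟩ := Fintype.exists_ne_of_one_lt_card (by omega) C
    obtain ⟨a, ha⟩ := C.exists_rep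
    obtain ⟨b, hb⟩ := C'.exists_rep
    obtain ⟨p⟩ := hc.preconnected a b
    exact hC' (hb.symm.trans (hstay a b p ha))
  · intro x _
    induction x with
    | h a b =>
      refine le_trans (Finset.card_le_card (t := {A.connectedComponentMk a,
        A.connectedComponentMk b}) ?_) Finset.card_le_two
      intro C hC
      simp only [Finset.bipartiteBelow, Finset.mem_filter, Finset.mem_univ, true_and, r] at hC
      obtain ⟨a', b', h, h1, h2⟩ := hC
      rw [Sym2.eq_iff] at h
      simp only [Finset.mem_insert, Finset.mem_singleton]
      grind

theorem tree3 [Finite V] [Nonempty V] (T : SimpleGraph V)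
    (h : LinearIndepOn (ZMod 2) (bvec3 V) T.edgeSet) :
    T.edgeSet.ncard + 1 ≤ Nat.card V ∧ (T.edgeSet.ncard + 1 = Nat.card V → T.IsTree) := by
  have h1 := rank3 T
  rw [finrank3 _ _ h] at h1
  have hpos : 0 < Nat.card T.ConnectedComponent := Nat.card_pos
  refine ⟨by omega, fun h2 => ?_⟩
  rw [isTree_iff_connected_and_card]
  refine ⟨⟨fun a b => ?_⟩, by rwa [Nat.card_coe_set_eq]⟩
  have : Nat.card T.ConnectedComponent = 1 := by omega
  have := (Nat.card_eq_one_iff_unique.1 this).1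
  exact ConnectedComponent.exact (Subsingleton.elim _ _)

end GraphPart

theorem stmt_3 {V : Type*} [Fintype V] (G : SimpleGraph V)
    (hG : EdgeConnGe G 4) (e f : Sym2 V) (he : e ∈ G.edgeSet) (hf : f ∈ G.edgeSet) :
    ∃ T₁ T₂ : SimpleGraph V,
      T₁ ≤ G.deleteEdges {e, f} ∧ T₂ ≤ G.deleteEdges {e, f} ∧
      T₁.IsTree ∧ T₂.IsTree ∧ Disjoint T₁.edgeSet T₂.edgeSet := by
  classical
  have hNE : Nonempty V := hG.1.nonempty
  set H := G.deleteEdges {e, f} with hH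
  obtain ⟨c, D, hgood, hnone, hspan⟩ := exchange3 (K := ZMod 2) (ι := Bool)
    (fun x : H.edgeSet => bvec3 V x.1)
  -- graphs from sets of edges
  let gr : Set H.edgeSet → SimpleGraph V := fun s => fromEdgeSet (Subtype.val '' s)
  have hgr : ∀ s, (gr s).edgeSet = Subtype.val '' s := by
    intro s
    simp only [gr, edgeSet_fromEdgeSet]
    rw [sdiff_eq_left]
    rw [Set.disjoint_left]
    rintro _ ⟨x, _, rfl⟩ hx
    exact H.not_isDiag_of_mem_edgeSet x.2 hx
  have hnc : ∀ s, (gr s).edgeSet.ncard = s.ncard := fun s => by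
    rw [hgr, Set.ncard_image_of_injective _ Subtype.val_injective]
  have hle : ∀ s, gr s ≤ H := by
    intro s
    rw [← edgeSet_subset_edgeSet, hgr]
    rintro _ ⟨x, _, rfl⟩
    exact x.2
  have himg : ∀ s : Set H.edgeSet, (fun x : H.edgeSet => bvec3 V x.1) '' s
      = bvec3 V '' (gr s).edgeSet := by
    intro s; rw [hgr, Set.image_image]
  let S : Bool → Set H.edgeSet := fun i => {a | c a = some i}
  have hind : ∀ i, LinearIndepOn (ZMod 2) (bvec3 V) (gr (S i)).edgeSet := by
    intro i
    rw [hgr]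
    exact LinearIndepOn.image_of_comp Subtype.val (bvec3 V) (hgood i)
  have hD : ∀ i, (S i ∩ D).ncard + Nat.card (gr D).ConnectedComponent = Nat.card V := by
    intro i
    rw [← rank3 (gr D), ← himg, ← finrank3 (K := ZMod 2) (fun x : H.edgeSet => bvec3 V x.1) _
      ((hgood i).mono Set.inter_subset_left)]
    have heq : Submodule.span (ZMod 2) ((fun x : H.edgeSet => bvec3 V x.1) '' (S i ∩ D))
        = Submodule.span (ZMod 2) ((fun x : H.edgeSet => bvec3 V x.1) '' D) := by
      apply le_antisymm
      · exact Submodule.span_mono (Set.image_mono Set.inter_subset_right)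
      · rw [Submodule.span_le]
        rintro _ ⟨a, ha, rfl⟩
        exact hspan i a ha
    exact congrArg (fun M : Submodule (ZMod 2) (Module.Dual (ZMod 2) (V → ZMod 2)) =>
      Module.finrank (ZMod 2) M + Nat.card (gr D).ConnectedComponent) heq
  have hsplit : ∀ i, (S i ∩ D).ncard + (S i \ D).ncard = (S i).ncard := fun i =>
    Set.ncard_inter_add_ncard_diff_eq_ncard _ _ (Set.toFinite _)
  have hcompl : (S true \ D).ncard + (S false \ D).ncard = Dᶜ.ncard := by
    rw [← Set.ncard_union_eq]
    · congr 1
      ext a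
      have := hnone a
      simp only [S, Set.mem_union, Set.mem_diff, Set.mem_setOf_eq, Set.mem_compl_iff]
      rcases h : c a with _ | _ | _ <;> simp_all
    · rw [Set.disjoint_left]
      rintro a ⟨h1, _⟩ ⟨h2, _⟩
      simp_all [S]
  have hcut : 2 * Nat.card (gr D).ConnectedComponent ≤ Dᶜ.ncard + 2 := by
    by_cases h2 : 2 ≤ Nat.card (gr D).ConnectedComponent
    · refine (cut3 G hG (gr D) h2).trans ?_
      have hsub : {x | x ∈ G.edgeSet ∧ x ∉ (gr D).edgeSet} ⊆ (Subtype.val '' Dᶜ) ∪ {e, f} := by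
        rintro x ⟨hx, hxD⟩
        by_cases hxe : x ∈ ({e, f} : Set (Sym2 V))
        · exact Or.inr hxe
        · left
          have hxH : x ∈ H.edgeSet := by rw [hH, edgeSet_deleteEdges]; exact ⟨hx, hxe⟩
          refine ⟨⟨x, hxH⟩, fun hd => hxD ?_, rfl⟩
          rw [hgr]; exact ⟨_, hd, rfl⟩
      refine (Set.ncard_le_ncard hsub (Set.toFinite _)).trans ((Set.ncard_union_le _ _).trans ?_)
      rw [Set.ncard_image_of_injective _ Subtype.val_injective]
      have : ({e, f} : Set (Sym2 V)).ncard ≤ 2 := by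
        refine (Set.ncard_insert_le e {f}).trans ?_
        simp
      omega
    · omega
  have ht1 := tree3 _ (hind true)
  have ht2 := tree3 _ (hind false)
  rw [hnc] at ht1 ht2
  have a1 := hD true
  have a2 := hD false
  have a3 := hsplit true
  have a4 := hsplit false
  refine ⟨gr (S true), gr (S false), hle _, hle _, ht1.2 (by omega), ht2.2 (by omega), ?_⟩
  rw [hgr, hgr, Set.disjoint_image_iff Subtype.val_injective, Set.disjoint_left]
  intro a h1 h2
  simp_all [S]
end

section
/- Let G be a finite simple cubic graph containing the graph K as a subgraph, i.e., there exist five pairwise distinct vertices v1, v2, v3, v4, v5 of G such that v1v2, v1v3, v2v4, v2v5, v3v4, v3v5, v4v5 are all edges of G. Then in any normal edge-coloring of G (with any set of colors), all seven of these edges are rich. -/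
open SimpleGraph

theorem colorSet_eq_aux {V C : Type*} [Fintype V] (G : SimpleGraph V) (hG : IsCubic G)
    (c : Sym2 V → C) (v a b d : V) (ha : G.Adj v a) (hb : G.Adj v b) (hd : G.Adj v d)
    (hab : a ≠ b) (had : a ≠ d) (hbd : b ≠ d) :
    colorSet G c v = {c s(v, a), c s(v, b), c s(v, d)} := by
  have hN : ({a, b, d} : Set V) = G.neighborSet v := by
    apply Set.eq_of_subset_of_ncard_le
    · rintro x (rfl | rfl | rfl) <;> assumption
    · rw [hG v, Set.ncard_eq_three.2 ⟨a, b, d, hab, had, hbd, rfl⟩]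
    · exact Set.toFinite _
  ext k
  constructor
  · rintro ⟨e, ⟨he, hv⟩, rfl⟩
    obtain ⟨w, rfl⟩ := hv
    have hw : w ∈ ({a, b, d} : Set V) := by rw [hN]; exact he
    rcases hw with rfl | rfl | rfl <;> simp
  · rintro (rfl | rfl | rfl)
    · exact ⟨_, ⟨ha, Sym2.mem_mk_left _ _⟩, rfl⟩
    · exact ⟨_, ⟨hb, Sym2.mem_mk_left _ _⟩, rfl⟩
    · exact ⟨_, ⟨hd, Sym2.mem_mk_left _ _⟩, rfl⟩

theorem proper_aux {V C : Type*} (G : SimpleGraph V) (c : Sym2 V → C)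
    (hc : IsProperEdgeColoring G c) (v a b : V) (ha : G.Adj v a) (hb : G.Adj v b)
    (hab : a ≠ b) : c s(v, a) ≠ c s(v, b) := by
  apply hc _ ha _ hb
  · intro h
    exact hab (Sym2.congr_right.1 h)
  · exact ⟨v, Sym2.mem_mk_left _ _, Sym2.mem_mk_left _ _⟩

theorem card_aux {C : Type*} (e a b x y : C) (h1 : e ≠ a) (h2 : e ≠ b) (h3 : a ≠ b)
    (h4 : e ≠ x) (h5 : e ≠ y) (h6 : x ≠ y)
    (h : (({e, a, b} : Set C) ∪ {e, x, y}).ncard = 3 ∨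
      (({e, a, b} : Set C) ∪ {e, x, y}).ncard = 5) :
    ((a = x ∧ b = y) ∨ (a = y ∧ b = x)) ∨
    ((({e, a, b} : Set C) ∪ {e, x, y}).ncard = 5 ∧ a ≠ x ∧ a ≠ y ∧ b ≠ x ∧ b ≠ y) := by
  classical
  have hE : (({e, a, b} : Set C) ∪ {e, x, y}) = (({e, a, b, x, y} : Finset C) : Set C) := by
    ext k
    simp
    tauto
  rw [hE, Set.ncard_coe_finset] at h ⊢
  by_cases p1 : a = x <;> by_cases p2 : a = y <;> by_cases p3 : b = x <;> by_cases p4 : b = y <;>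
    simp_all [Finset.card_insert_of_notMem]
  all_goals grind

theorem edge_aux {V C : Type*} [Fintype V] (G : SimpleGraph V) (hG : IsCubic G)
    (c : Sym2 V → C) (hc : IsNormalEdgeColoring G c) (u v a b x y : V)
    (huv : G.Adj u v) (ha : G.Adj u a) (hb : G.Adj u b) (hx : G.Adj v x) (hy : G.Adj v y)
    (h1 : v ≠ a) (h2 : v ≠ b) (h3 : a ≠ b) (h4 : u ≠ x) (h5 : u ≠ y) (h6 : x ≠ y) :
    ((c s(u, a) = c s(v, x) ∧ c s(u, b) = c s(v, y)) ∨
      (c s(u, a) = c s(v, y) ∧ c s(u, b) = c s(v, x))) ∨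
    (IsRichAt G c u v ∧ c s(u, a) ≠ c s(v, x) ∧ c s(u, a) ≠ c s(v, y) ∧
      c s(u, b) ≠ c s(v, x) ∧ c s(u, b) ≠ c s(v, y)) := by
  have h := hc.2 u v huv
  have P := proper_aux G c hc.1
  unfold IsPoorAt IsRichAt at h
  unfold IsRichAt
  rw [colorSet_eq_aux G hG c u v a b huv ha hb h1 h2 h3,
    colorSet_eq_aux G hG c v u x y huv.symm hx hy h4 h5 h6, Sym2.eq_swap (a := v) (b := u)] at h ⊢
  have q1 := P v u x huv.symm hx h4
  have q2 := P v u y huv.symm hy h5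
  rw [Sym2.eq_swap (a := v) (b := u)] at q1 q2
  exact card_aux _ _ _ _ _ (P u v a huv ha h1) (P u v b huv hb h2) (P u a b ha hb h3)
    q1 q2 (P v x y hx hy h6) h

theorem stmt_4 {V : Type*} [Fintype V] (G : SimpleGraph V) (hG : IsCubic G)
    (v₁ v₂ v₃ v₄ v₅ : V) (hdist : ([v₁, v₂, v₃, v₄, v₅] : List V).Nodup)
    (h12 : G.Adj v₁ v₂) (h13 : G.Adj v₁ v₃) (h24 : G.Adj v₂ v₄) (h25 : G.Adj v₂ v₅)
    (h34 : G.Adj v₃ v₄) (h35 : G.Adj v₃ v₅) (h45 : G.Adj v₄ v₅)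
    {C : Type*} (c : Sym2 V → C) (hc : IsNormalEdgeColoring G c) :
    IsRichAt G c v₁ v₂ ∧ IsRichAt G c v₁ v₃ ∧ IsRichAt G c v₂ v₄ ∧ IsRichAt G c v₂ v₅ ∧
      IsRichAt G c v₃ v₄ ∧ IsRichAt G c v₃ v₅ ∧ IsRichAt G c v₄ v₅ := by
  classical
  simp only [List.nodup_cons, List.mem_cons, List.not_mem_nil, or_false, not_or,
    not_false_eq_true, List.nodup_nil, and_true] at hdist
  obtain ⟨⟨n12, n13, n14, n15⟩, ⟨n23, n24, n25⟩, ⟨n34, n35⟩, n45⟩ := hdist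
  have E := edge_aux G hG c hc
  have P := proper_aux G c hc.1
  obtain ⟨z, hz, z2, z3⟩ : ∃ z, G.Adj v₁ z ∧ z ≠ v₂ ∧ z ≠ v₃ := by
    by_contra! hcon
    have hsub : G.neighborSet v₁ ⊆ {v₂, v₃} := by
      intro w hw
      by_cases hw2 : w = v₂
      · simp [hw2]
      · simp [hcon w hw hw2]
    have := Set.ncard_le_ncard hsub
    have h2 := Set.ncard_pair n23
    have := hG v₁
    omega
  have e12 := E v₁ v₂ v₃ z v₄ v₅ h12 h13 hz h24 h25 n23 z2.symm z3.symm n14 n15 n45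
  have e13 := E v₁ v₃ v₂ z v₄ v₅ h13 h12 hz h34 h35 (Ne.symm n23) z3.symm z2.symm n14 n15 n45
  have e24 := E v₂ v₄ v₁ v₅ v₃ v₅ h24 h12.symm h25 h34.symm h45
    (Ne.symm n14) n45 n15 n23 n25 n35
  have e25 := E v₂ v₅ v₁ v₄ v₃ v₄ h25 h12.symm h24 h35.symm h45.symm
    (Ne.symm n15) (Ne.symm n45) n14 n23 n24 n34
  have e34 := E v₃ v₄ v₁ v₅ v₂ v₅ h34 h13.symm h35 h24.symm h45
    (Ne.symm n14) n45 n15 (Ne.symm n23) n35 n25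
  have e35 := E v₃ v₅ v₁ v₄ v₂ v₄ h35 h13.symm h34 h25.symm h45.symm
    (Ne.symm n15) (Ne.symm n45) n14 (Ne.symm n23) n34 n24
  have e45 := E v₄ v₅ v₂ v₃ v₂ v₃ h45 h24.symm h34.symm h25.symm h35.symm
    (Ne.symm n25) (Ne.symm n35) n23 (Ne.symm n24) (Ne.symm n34) n23
  have p1 := P v₁ v₂ v₃ h12 h13 n23
  have p2 := P v₂ v₄ v₅ h24 h25 n45
  have p3 := P v₃ v₄ v₅ h34 h35 n45
  have p4 := P v₄ v₂ v₃ h24.symm h34.symm n23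
  have p5 := P v₅ v₂ v₃ h25.symm h35.symm n23
  have p6 := P v₄ v₂ v₅ h24.symm h45 n25
  have p7 := P v₄ v₃ v₅ h34.symm h45 n35
  have p8 := P v₅ v₂ v₄ h25.symm h45.symm n24
  have p9 := P v₅ v₃ v₄ h35.symm h45.symm n34
  simp only [Sym2.eq_swap (a := v₂) (b := v₁), Sym2.eq_swap (a := v₃) (b := v₁),
    Sym2.eq_swap (a := v₄) (b := v₂), Sym2.eq_swap (a := v₄) (b := v₃),
    Sym2.eq_swap (a := v₅) (b := v₂), Sym2.eq_swap (a := v₅) (b := v₃),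
    Sym2.eq_swap (a := v₅) (b := v₄)] at e12 e13 e24 e25 e34 e35 e45 p1 p2 p3 p4 p5 p6 p7 p8 p9
  clear E P
  generalize c s(v₁, v₂) = a at *
  generalize c s(v₁, v₃) = b at *
  generalize c s(v₂, v₄) = p at *
  generalize c s(v₂, v₅) = q at *
  generalize c s(v₃, v₄) = r at *
  generalize c s(v₃, v₅) = s at *
  generalize c s(v₄, v₅) = t at *
  grind
end

section
/- Let G be a finite simple cubic graph containing the graph K as a subgraph, i.e., there exist five pairwise distinct vertices v1, v2, v3, v4, v5 of G such that v1v2, v1v3, v2v4, v2v5, v3v4, v3v5, v4v5 are all edges of G. Then in any normal edge-coloring of G, these seven edges receive pairwise different colors. -/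
open SimpleGraph

theorem aux_colorSet {V C : Type*} [Fintype V] (G : SimpleGraph V) (hG : IsCubic G)
    (c : Sym2 V → C) {v x y z : V} (hx : G.Adj v x) (hy : G.Adj v y) (hz : G.Adj v z)
    (hxy : x ≠ y) (hxz : x ≠ z) (hyz : y ≠ z) :
    colorSet G c v = {c s(v, x), c s(v, y), c s(v, z)} := by
  have hN : ({x, y, z} : Set V) = G.neighborSet v := by
    apply Set.eq_of_subset_of_ncard_le
    · rintro w (rfl | rfl | rfl) <;> assumption
    · rw [hG v, Set.ncard_eq_three.2 ⟨x, y, z, hxy, hxz, hyz, rfl⟩]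
    · exact Set.toFinite _
  ext k
  constructor
  · rintro ⟨e, ⟨he, hv⟩, rfl⟩
    obtain ⟨w, rfl⟩ := Sym2.mem_iff_exists.1 hv
    have hw : w ∈ ({x, y, z} : Set V) := by rw [hN]; exact he
    rcases hw with rfl | rfl | rfl <;> simp
  · rintro (rfl | rfl | rfl)
    · exact ⟨_, ⟨hx, Sym2.mem_mk_left _ _⟩, rfl⟩
    · exact ⟨_, ⟨hy, Sym2.mem_mk_left _ _⟩, rfl⟩
    · exact ⟨_, ⟨hz, Sym2.mem_mk_left _ _⟩, rfl⟩

theorem aux_proper {V C : Type*} {G : SimpleGraph V}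
    {c : Sym2 V → C} (hc : IsProperEdgeColoring G c) {v x y : V} (hx : G.Adj v x)
    (hy : G.Adj v y) (hxy : x ≠ y) : c s(v, x) ≠ c s(v, y) := by
  apply hc _ hx _ hy
  · intro h
    exact hxy (Sym2.congr_right.1 h)
  · exact ⟨v, Sym2.mem_mk_left _ _, Sym2.mem_mk_left _ _⟩

theorem aux_edge {V C : Type*} [Fintype V] {G : SimpleGraph V} (hG : IsCubic G)
    {c : Sym2 V → C} (hc : IsNormalEdgeColoring G c) {u v x y z w : V} (huv : G.Adj u v)
    (hx : G.Adj u x) (hy : G.Adj u y) (hz : G.Adj v z) (hw : G.Adj v w)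
    (hxy : x ≠ y) (hxv : x ≠ v) (hyv : y ≠ v) (hzw : z ≠ w) (hzu : z ≠ u) (hwu : w ≠ u)
    (h : c s(u, x) = c s(v, z)) : c s(u, y) = c s(v, w) := by
  by_contra hne
  have h1 := aux_proper hc.1 hx hy hxy
  have h2 := aux_proper hc.1 hx huv hxv
  have h3 := aux_proper hc.1 hy huv hyv
  have h4 := aux_proper hc.1 hz hw hzw
  have h6 := aux_proper hc.1 hw huv.symm hwu
  have hs := hc.2 u v huv
  rw [IsPoorAt, IsRichAt, aux_colorSet G hG c huv hx hy hxv.symm hyv.symm hxy,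
    aux_colorSet G hG c huv.symm hz hw hzu.symm hwu.symm hzw] at hs
  rw [Sym2.eq_swap (a := v) (b := u)] at hs h6
  rw [← h] at hs h4
  generalize c s(u, x) = p at *
  generalize c s(u, y) = q at *
  generalize c s(u, v) = e at *
  generalize c s(v, w) = s at *
  have hS : ({e, p, q} ∪ {e, p, s} : Set C) = {e, p, q, s} := by
    ext k; simp; tauto
  have : ({e, p, q, s} : Set C).ncard = 4 := by
    classical
    have : ({e, p, q, s} : Set C) = (({e, p, q, s} : Finset C) : Set C) := by simp
    rw [this, Set.ncard_coe_finset]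
    rw [Finset.card_insert_of_notMem, Finset.card_insert_of_notMem,
      Finset.card_insert_of_notMem, Finset.card_singleton] <;> grind
  rw [hS, this] at hs
  omega

theorem stmt_5 {V : Type*} [Fintype V] (G : SimpleGraph V) (hG : IsCubic G)
    (v₁ v₂ v₃ v₄ v₅ : V) (hdist : ([v₁, v₂, v₃, v₄, v₅] : List V).Nodup)
    (h12 : G.Adj v₁ v₂) (h13 : G.Adj v₁ v₃) (h24 : G.Adj v₂ v₄) (h25 : G.Adj v₂ v₅)
    (h34 : G.Adj v₃ v₄) (h35 : G.Adj v₃ v₅) (h45 : G.Adj v₄ v₅)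
    {C : Type*} (c : Sym2 V → C) (hc : IsNormalEdgeColoring G c) :
    ∀ e ∈ ({s(v₁, v₂), s(v₁, v₃), s(v₂, v₄), s(v₂, v₅), s(v₃, v₄), s(v₃, v₅), s(v₄, v₅)} :
        Set (Sym2 V)),
      ∀ f ∈ ({s(v₁, v₂), s(v₁, v₃), s(v₂, v₄), s(v₂, v₅), s(v₃, v₄), s(v₃, v₅), s(v₄, v₅)} :
        Set (Sym2 V)), e ≠ f → c e ≠ c f := by
  simp only [List.nodup_cons, List.mem_cons, List.not_mem_nil, or_false, not_or] at hdist
  obtain ⟨⟨n12, n13, n14, n15⟩, ⟨n23, n24, n25⟩, ⟨n34, n35⟩, n45, -⟩ := hdist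
  have P := @aux_proper V C G c hc.1
  have E := @aux_edge V C _ G hG c hc
  have a21 := h12.symm
  have a31 := h13.symm
  have a42 := h24.symm
  have a52 := h25.symm
  have a43 := h34.symm
  have a53 := h35.symm
  have a54 := h45.symm
  have ab := P h12 h13 n23
  have ap := P a21 h24 n14
  have aq := P a21 h25 n15
  have pq := P h24 h25 n45
  have br := P a31 h34 n14
  have bs := P a31 h35 n15
  have rs := P h34 h35 n45
  have pr := P a42 a43 n23
  have pt := P a42 h45 n25
  have rt := P a43 h45 n35
  have qs := P a52 a53 n23
  have qt := P a52 a54 n24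
  have st := P a53 a54 n34
  have n21 := Ne.symm n12
  have n31 := Ne.symm n13
  have n41 := Ne.symm n14
  have n51 := Ne.symm n15
  have n32 := Ne.symm n23
  have n42 := Ne.symm n24
  have n52 := Ne.symm n25
  have n43 := Ne.symm n34
  have n53 := Ne.symm n35
  have n54 := Ne.symm n45
  -- edge v₂v₄
  have e1 := E h24 a21 h25 a43 h45 n15 n14 n54 n35 n32 n52
  have e1' := E h24 h25 a21 h45 a43 n51 n54 n14 n53 n52 n32
  have e2 := E h24 a21 h25 h45 a43 n15 n14 n54 n53 n52 n32
  have e2' := E h24 h25 a21 a43 h45 n51 n54 n14 n35 n32 n52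
  -- edge v₂v₅
  have f1 := E h25 a21 h24 a53 a54 n14 n15 n45 n34 n32 n42
  have f2 := E h25 a21 h24 a54 a53 n14 n15 n45 n43 n42 n32
  have f2' := E h25 h24 a21 a53 a54 n41 n45 n15 n34 n32 n42
  -- edge v₃v₄
  have g1 := E h34 a31 h35 a42 h45 n15 n14 n54 n25 n23 n53
  have g2 := E h34 a31 h35 h45 a42 n15 n14 n54 n52 n53 n23
  have g2' := E h34 h35 a31 a42 h45 n51 n54 n14 n25 n23 n53
  -- edge v₃v₅
  have k1 := E h35 a31 h34 a52 a54 n14 n15 n45 n24 n23 n43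
  have k2 := E h35 a31 h34 a54 a52 n14 n15 n45 n42 n43 n23
  have k2' := E h35 h34 a31 a52 a54 n41 n45 n15 n24 n23 n43
  clear E P
  simp only [Sym2.eq_swap (a := v₂) (b := v₁), Sym2.eq_swap (a := v₃) (b := v₁), Sym2.eq_swap (a := v₄) (b := v₂), Sym2.eq_swap (a := v₅) (b := v₂), Sym2.eq_swap (a := v₄) (b := v₃), Sym2.eq_swap (a := v₅) (b := v₃), Sym2.eq_swap (a := v₅) (b := v₄)]
    at ab ap aq pq br bs rs pr pt rt qs qt st e1 e1' e2 e2' f1 f2 f2' g1 g2 g2' k1 k2 k2'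
  intro e he f hf hef
  simp only [Set.mem_insert_iff, Set.mem_singleton_iff] at he hf
  clear hc hG
  rcases he with rfl | rfl | rfl | rfl | rfl | rfl | rfl <;>
  rcases hf with rfl | rfl | rfl | rfl | rfl | rfl | rfl <;>
  first
  | exact absurd rfl hef
  | (clear hef; grind only)
end

section
/- Let G be a finite simple cubic graph and let c be an edge-coloring of G with colors in a type C. Suppose there exists a function f : C → C → C, symmetric in its arguments, such that for every vertex v and every listing e1, e2, e3 of the three pairwise distinct edges incident to v, one has c(e3) = f(c(e1), c(e2)). Then c is a normal edge-coloring of G. -/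
open SimpleGraph

theorem colorSet_aux {V : Type*} (G : SimpleGraph V) (hG : IsCubic G)
    {C : Type*} (c : Sym2 V → C) (hproper : IsProperEdgeColoring G c)
    (f : C → C → C)
    (hf : ∀ v : V, ∀ e₁ e₂ e₃ : Sym2 V,
      e₁ ∈ G.incidenceSet v → e₂ ∈ G.incidenceSet v → e₃ ∈ G.incidenceSet v →
      e₁ ≠ e₂ → e₁ ≠ e₃ → e₂ ≠ e₃ → c e₃ = f (c e₁) (c e₂))
    (u v : V) (h : G.Adj u v) :
    ∃ p q : C, colorSet G c u = {c s(u, v), p, q} ∧ c s(u, v) ≠ p ∧ c s(u, v) ≠ q ∧ p ≠ q ∧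
      q = f (c s(u, v)) p ∧ p = f (c s(u, v)) q := by
  have key : ∃ x y : V, v ≠ x ∧ v ≠ y ∧ x ≠ y ∧ G.neighborSet u = {v, x, y} := by
    obtain ⟨x, y, z, hxy, hxz, hyz, hs⟩ := Set.ncard_eq_three.mp (hG u)
    have hv : v ∈ G.neighborSet u := h
    rw [hs] at hv
    rcases hv with rfl | rfl | rfl
    · exact ⟨y, z, hxy, hxz, hyz, hs⟩
    · exact ⟨x, z, hxy.symm, hyz, hxz, by rw [hs]; ext; simp; tauto⟩
    · exact ⟨x, y, hxz.symm, hyz.symm, hxy, by rw [hs]; ext; simp; tauto⟩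
  obtain ⟨x, y, hvx, hvy, hxy, hs⟩ := key
  have hx : G.Adj u x := by
    have : x ∈ G.neighborSet u := by rw [hs]; simp
    exact this
  have hy : G.Adj u y := by
    have : y ∈ G.neighborSet u := by rw [hs]; simp
    exact this
  have inc : ∀ w, G.Adj u w → s(u, w) ∈ G.incidenceSet u := fun w hw => ⟨hw, by simp⟩
  have ne : ∀ w w', w ≠ w' → s(u, w) ≠ s(u, w') := by
    intro w w' hw he
    exact hw (Sym2.congr_right.mp he)
  have cne : ∀ w w', G.Adj u w → G.Adj u w' → w ≠ w' → c s(u, w) ≠ c s(u, w') :=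
    fun w w' hw hw' hn => hproper _ hw _ hw' (ne _ _ hn) ⟨u, by simp, by simp⟩
  refine ⟨c s(u, x), c s(u, y), ?_, cne _ _ h hx hvx, cne _ _ h hy hvy, cne _ _ hx hy hxy,
    hf u _ _ _ (inc _ h) (inc _ hx) (inc _ hy) (ne _ _ hvx) (ne _ _ hvy) (ne _ _ hxy),
    hf u _ _ _ (inc _ h) (inc _ hy) (inc _ hx) (ne _ _ hvy) (ne _ _ hvx) (ne _ _ hxy.symm)⟩
  have hI : G.incidenceSet u = (fun w => s(u, w)) '' G.neighborSet u := by
    ext e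
    constructor
    · rintro ⟨he, hu⟩
      obtain ⟨w, rfl⟩ := hu
      exact ⟨w, he, rfl⟩
    · rintro ⟨w, hw, rfl⟩
      exact inc w hw
  rw [colorSet, hI, hs]
  simp only [Set.image_insert_eq, Set.image_singleton]

theorem stmt_8 {V : Type*} [Fintype V] (G : SimpleGraph V) (hG : IsCubic G)
    {C : Type*} (c : Sym2 V → C) (hproper : IsProperEdgeColoring G c)
    (f : C → C → C) (hsymm : ∀ a b : C, f a b = f b a)
    (hf : ∀ v : V, ∀ e₁ e₂ e₃ : Sym2 V,
      e₁ ∈ G.incidenceSet v → e₂ ∈ G.incidenceSet v → e₃ ∈ G.incidenceSet v →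
      e₁ ≠ e₂ → e₁ ≠ e₃ → e₂ ≠ e₃ → c e₃ = f (c e₁) (c e₂)) :
    IsNormalEdgeColoring G c := by
  refine ⟨hproper, fun u v h => ?_⟩
  obtain ⟨p, q, hu, hap, haq, hpq, hq, hp⟩ := colorSet_aux G hG c hproper f hf u v h
  obtain ⟨r, t, hv, har, hat, hrt, ht, hr⟩ := colorSet_aux G hG c hproper f hf v u h.symm
  rw [Sym2.eq_swap] at hv har hat ht hr
  unfold IsPoorAt IsRichAt
  rw [hu, hv]
  generalize c s(u, v) = a at *
  have three : ∀ S : Set C, S = {a, p, q} → S.ncard = 3 := by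
    intro S hS
    exact Set.ncard_eq_three.mpr ⟨a, p, q, hap, haq, hpq, hS⟩
  by_cases h1 : p = r
  · left
    have h2 : q = t := by rw [hq, ht, h1]
    subst h1 h2
    exact three _ (Set.union_self _)
  by_cases h2 : p = t
  · left
    have h3 : q = r := by rw [hq, hr, h2]
    subst h2 h3
    exact three _ (by ext; simp)
  have h3 : q ≠ r := by
    intro h3
    exact h2 (by rw [hp, ht, h3])
  have h4 : q ≠ t := by
    intro h4
    exact h1 (by rw [hp, hr, h4])
  right
  classical
  have : ({a, p, q} ∪ {a, r, t} : Set C) = (({a, p, q, r, t} : Finset C) : Set C) := by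
    ext; simp; tauto
  rw [this, Set.ncard_coe_finset]
  clear hq hp ht hr
  simp [Finset.card_insert_of_notMem, *]
end

section
/- Every finite simple bridgeless cubic graph G admits a normal 7-edge-coloring; that is, χ'_N(G) ≤ 7. -/
open SimpleGraph

set_option linter.unusedSectionVars false
set_option linter.unnecessarySeqFocus false
open Finset in
def bdry {V E A : Type*} [DecidableEq V] [Fintype E] [AddCommGroup A] (s t : E → V) (φ : E → A)
    (v : V) : A := ∑ e, ((if s e = v then φ e else 0) + (if t e = v then φ e else 0))

def Joins {V E : Type*} (s t : E → V) (e : E) (a b : V) : Prop :=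
  (s e = a ∧ t e = b) ∨ (s e = b ∧ t e = a)

inductive Trail {V E : Type*} [DecidableEq V] [DecidableEq E] (s t : E → V) (x : V) :
    V → Finset E → Finset V → Prop
  | nil : Trail s t x x ∅ {x}
  | cons {v w : V} {F : Finset E} {W : Finset V} {e : E} :
      Trail s t x v F W → Joins s t e v w → e ∉ F → Trail s t x w (insert e F) (insert w W)

section
variable {V E : Type*} [DecidableEq V] [DecidableEq E] {s t : E → V}

theorem Trail.start_mem {x y F W} (h : Trail s t x y F W) : x ∈ W := by
  induction h with
  | nil => simp
  | cons _ _ _ ih => exact Finset.mem_insert_of_mem ih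

theorem Trail.end_mem {x y F W} (h : Trail s t x y F W) : y ∈ W := by
  cases h <;> simp

theorem Trail.ends {x y F W} (h : Trail s t x y F W) : ∀ e ∈ F, s e ∈ W ∧ t e ∈ W := by
  induction h with
  | nil => simp
  | cons h1 hj _ ih =>
    intro e he
    rcases Finset.mem_insert.1 he with rfl | he
    · have := h1.end_mem
      rcases hj with ⟨h1, h2⟩ | ⟨h1, h2⟩ <;> simp [h1, h2, this]
    · have := ih e he
      exact ⟨Finset.mem_insert_of_mem this.1, Finset.mem_insert_of_mem this.2⟩

theorem Trail.joins_mem {x y F W e a b} (h : Trail s t x y F W) (he : e ∈ F)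
    (hj : Joins s t e a b) : a ∈ W ∧ b ∈ W := by
  have := h.ends e he
  rcases hj with ⟨rfl, rfl⟩ | ⟨rfl, rfl⟩
  · exact this
  · exact this.symm

theorem Trail.pre {x y F W} (h : Trail s t x y F W) : ∀ z ∈ W, ∃ F' W', Trail s t x z F' W' ∧
    F' ⊆ F ∧ W' ⊆ W := by
  induction h with
  | nil => intro z hz; obtain rfl := Finset.mem_singleton.1 hz; exact ⟨_, _, .nil, by simp, by simp⟩
  | cons h1 hj he ih =>
    intro z hz
    rcases Finset.mem_insert.1 hz with rfl | hz
    · exact ⟨_, _, .cons h1 hj he, by simp, by simp⟩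
    · obtain ⟨F', W', h, hF, hW⟩ := ih z hz
      exact ⟨F', W', h, hF.trans (Finset.subset_insert _ _), hW.trans (Finset.subset_insert _ _)⟩

theorem Trail.shift {x y F W} (h : Trail s t x y F W) : ∀ F2 W2, Trail s t x y F2 W2 →
    Disjoint F F2 → ∀ z ∈ W, ∃ F' W' F2' W2', Trail s t x z F' W' ∧ Trail s t x z F2' W2' ∧
    Disjoint F' F2' ∧ W' ⊆ W ∪ W2 ∧ W2' ⊆ W ∪ W2 := by
  induction h with
  | nil =>
    intro F2 W2 h2 hd z hz
    obtain rfl := Finset.mem_singleton.1 hz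
    exact ⟨_, _, _, _, .nil, h2, hd, by simp, by simp⟩
  | @cons v w F W e h1 hj he ih =>
    intro F2 W2 h2 hd z hz
    rcases Finset.mem_insert.1 hz with rfl | hz
    · exact ⟨_, _, _, _, .cons h1 hj he, h2, hd, Finset.subset_union_left, Finset.subset_union_right⟩
    · have hd' := Finset.disjoint_insert_left.1 hd
      have h3 : Trail s t x v (insert e F2) (insert v W2) := .cons h2 hj.symm hd'.1
      obtain ⟨F', W', F2', W2', a, b, c, d, f⟩ := ih _ _ h3
        (Finset.disjoint_insert_right.2 ⟨he, hd'.2⟩) z hz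
      have := h1.end_mem
      have hs : W ∪ insert v W2 ⊆ insert w W ∪ W2 := by
        intro a; simp only [Finset.mem_union, Finset.mem_insert]; grind
      exact ⟨F', W', F2', W2', a, b, c, d.trans hs, f.trans hs⟩

/-- number of edges between two sets -/
def eb [Fintype E] (s t : E → V) (A B : Finset V) : Finset E :=
  Finset.univ.filter fun e => (s e ∈ A ∧ t e ∈ B) ∨ (s e ∈ B ∧ t e ∈ A)

theorem menger2 [Fintype E] (S : Finset V)
    (hS : ∀ A ⊆ S, A.Nonempty → (S \ A).Nonempty → 2 ≤ (eb s t A (S \ A)).card)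
    {x y : V} (hx : x ∈ S) (hy : y ∈ S) :
    ∃ F W F2 W2, Trail s t x y F W ∧ Trail s t x y F2 W2 ∧ Disjoint F F2 ∧ W ⊆ S ∧ W2 ⊆ S := by
  classical
  set Z := S.filter fun y => ∃ F W F2 W2, Trail s t x y F W ∧ Trail s t x y F2 W2 ∧
    Disjoint F F2 ∧ W ⊆ S ∧ W2 ⊆ S with hZ
  suffices h : S \ Z = ∅ by
    have : y ∈ Z := by
      by_contra hc
      have : y ∈ S \ Z := Finset.mem_sdiff.2 ⟨hy, hc⟩
      simp [h] at this
    exact (Finset.mem_filter.1 this).2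
  by_contra hne
  have hne := Finset.nonempty_iff_ne_empty.2 hne
  have hxZ : x ∈ Z := Finset.mem_filter.2 ⟨hx, _, _, _, _, .nil, .nil, by simp, by simpa, by simpa⟩
  have hc := hS Z (Finset.filter_subset _ _) ⟨x, hxZ⟩ hne
  obtain ⟨e, he⟩ : (eb s t Z (S \ Z)).Nonempty := Finset.card_pos.1 (by omega)
  obtain ⟨v, v', hv, hv', hj⟩ : ∃ v v', v ∈ Z ∧ v' ∈ S \ Z ∧ Joins s t e v v' := by
    rcases (Finset.mem_filter.1 he).2 with h | h
    · exact ⟨_, _, h.1, h.2, .inl ⟨rfl, rfl⟩⟩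
    · exact ⟨_, _, h.2, h.1, .inr ⟨rfl, rfl⟩⟩
  obtain ⟨F, W, F2, W2, hP, hR, hd, hW, hW2⟩ := (Finset.mem_filter.1 hv).2
  have hAZ : ∀ z ∈ W ∪ W2, z ∈ Z := by
    intro z hz
    rcases Finset.mem_union.1 hz with h | h
    · obtain ⟨F', W', F2', W2', a, b, c, d, f⟩ := hP.shift _ _ hR hd z h
      have := Finset.union_subset hW hW2
      exact Finset.mem_filter.2 ⟨hW h, F', W', F2', W2', a, b, c, d.trans this, f.trans this⟩
    · obtain ⟨F', W', F2', W2', a, b, c, d, f⟩ := hR.shift _ _ hP hd.symm z h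
      have := Finset.union_subset hW2 hW
      exact Finset.mem_filter.2 ⟨hW2 h, F', W', F2', W2', a, b, c, d.trans this, f.trans this⟩
  have hv'S := (Finset.mem_sdiff.1 hv').1
  have hv'Z := (Finset.mem_sdiff.1 hv').2
  have heF : e ∉ F := fun h =>
    hv'Z (hAZ _ (Finset.mem_union_left _ (hP.joins_mem h hj).2))
  have heF2 : e ∉ F2 := fun h =>
    hv'Z (hAZ _ (Finset.mem_union_right _ (hR.joins_mem h hj).2))
  set C := S.filter fun z => ∃ F' W' F2' W2', Trail s t x z F' W' ∧ Trail s t x v F2' W2' ∧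
    Disjoint F' F2' ∧ W' ⊆ S ∧ W2' ⊆ W ∪ W2 ∧ e ∉ F' ∧ e ∉ F2' with hC
  have hAC : ∀ z ∈ W ∪ W2, z ∈ C := by
    intro z hz
    rcases Finset.mem_union.1 hz with h | h
    · obtain ⟨F', W', a, b, c⟩ := hP.pre z h
      exact Finset.mem_filter.2 ⟨hW h, F', W', F2, W2, a, hR, hd.mono_left b, c.trans hW,
        Finset.subset_union_right, fun h => heF (b h), heF2⟩
    · obtain ⟨F', W', a, b, c⟩ := hR.pre z h
      exact Finset.mem_filter.2 ⟨hW2 h, F', W', F, W, a, hP, hd.symm.mono_left b, c.trans hW2,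
        Finset.subset_union_left, fun h => heF2 (b h), heF⟩
  have hstep : ∀ g c z, c ∈ C → z ∈ S \ C → Joins s t g c z → g = e := by
    intro g c z hc hz hg
    by_contra hge
    have hzS := (Finset.mem_sdiff.1 hz).1
    have hzC := (Finset.mem_sdiff.1 hz).2
    obtain ⟨F', W', F2', W2', a, b, d, f, k, l, m⟩ := (Finset.mem_filter.1 hc).2
    have hg1 : g ∉ F' := fun h => by
      have hzW : z ∈ W' := (a.joins_mem h hg).2
      obtain ⟨F3, W3, a3, b3, c3⟩ := a.pre z hzW
      exact hzC (Finset.mem_filter.2 ⟨hzS, F3, W3, F2', W2', a3, b, d.mono_left b3, c3.trans f, k,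
        fun h => l (b3 h), m⟩)
    have hg2 : g ∉ F2' := fun h => by
      have hzW : z ∈ W2' := (b.joins_mem h hg).2
      exact hzC (hAC z (k hzW))
    refine hzC (Finset.mem_filter.2 ⟨hzS, _, _, F2', W2', .cons a hg hg1, b,
      Finset.disjoint_insert_left.2 ⟨hg2, d⟩, Finset.insert_subset hzS f, k, ?_, m⟩)
    simp only [Finset.mem_insert, not_or]
    exact ⟨fun h => hge h.symm, l⟩
  have hv'C : v' ∈ C := by
    by_contra hcon
    have h2 := hS C (Finset.filter_subset _ _) ⟨x, hAC x (Finset.mem_union_left _ hP.start_mem)⟩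
      ⟨v', Finset.mem_sdiff.2 ⟨hv'S, hcon⟩⟩
    have : eb s t C (S \ C) ⊆ {e} := by
      intro g hg
      rcases (Finset.mem_filter.1 hg).2 with h | h
      · exact Finset.mem_singleton.2 (hstep g _ _ h.1 h.2 (.inl ⟨rfl, rfl⟩))
      · exact Finset.mem_singleton.2 (hstep g _ _ h.2 h.1 (.inr ⟨rfl, rfl⟩))
    have := Finset.card_le_card this
    simp at this
    omega
  obtain ⟨F', W', F2', W2', a, b, d, f, k, l, m⟩ := (Finset.mem_filter.1 hv'C).2
  exact hv'Z (Finset.mem_filter.2 ⟨hv'S, F', W', _, _, a, .cons b hj m,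
    Finset.disjoint_insert_right.2 ⟨l, d⟩, f,
    Finset.insert_subset hv'S (k.trans (Finset.union_subset hW hW2))⟩)

variable [Fintype E] {A : Type*} [AddCommGroup A]

theorem bdry_add (φ ψ : E → A) (v : V) : bdry s t (fun e => φ e + ψ e) v =
    bdry s t φ v + bdry s t ψ v := by
  unfold bdry
  rw [← Finset.sum_add_distrib]
  refine Finset.sum_congr rfl fun e _ => ?_
  split_ifs <;> simp <;> abel

theorem bdry_sum {ι : Type*} (I : Finset ι) (φ : ι → E → A) (v : V) :
    bdry s t (fun e => ∑ i ∈ I, φ i e) v = ∑ i ∈ I, bdry s t (φ i) v := by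
  classical
  induction I using Finset.induction_on with
  | empty => simp [bdry]
  | insert a I ha ih => 
    simp only [Finset.sum_insert ha]
    rw [bdry_add, ih]

theorem bdry_single (e : E) (c : A) (v : V) : bdry s t (fun g => if g = e then c else 0) v =
    (if s e = v then c else 0) + (if t e = v then c else 0) := by
  unfold bdry
  rw [Finset.sum_eq_single e] <;> simp +contextual

theorem bdry_congr (φ ψ : E → A) (v : V) (h : ∀ e, (s e = v ∨ t e = v) → φ e = ψ e) :
    bdry s t φ v = bdry s t ψ v := by
  unfold bdry
  refine Finset.sum_congr rfl fun e _ => ?_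
  have := h e
  split_ifs <;> simp_all

theorem Trail.bdry (h2 : ∀ a : A, a + a = 0) {x y F W} (h : Trail s t x y F W) (c : A) (v : V) :
    bdry s t (fun e => if e ∈ F then c else 0) v =
      (if x = v then c else 0) + (if y = v then c else 0) := by
  induction h with
  | nil => simp [_root_.bdry, h2]
  | @cons p w F W e h1 hj he ih =>
    have : (fun g => if g ∈ insert e F then c else 0) =
      fun g => (if g = e then c else 0) + (if g ∈ F then c else 0) := by
      ext g
      by_cases hg : g = e
      · subst hg; simp [he]
      · simp [hg]
    rw [this, bdry_add, ih, bdry_single]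
    have e3 : ∀ a b : A, a + (b + a) = b := fun a b => by
      rw [add_comm b, ← add_assoc, h2, zero_add]
    rcases hj with ⟨a, b⟩ | ⟨a, b⟩ <;> rw [a, b]
    · generalize (if p = v then c else 0) = P
      generalize (if w = v then c else 0) = Q
      generalize (if x = v then c else 0) = R
      calc P + Q + (R + P) = (P + P) + (R + Q) := by abel
        _ = _ := by rw [h2, zero_add]
    · generalize (if p = v then c else 0) = P
      generalize (if w = v then c else 0) = Q
      generalize (if x = v then c else 0) = R
      calc Q + P + (R + P) = (P + P) + (R + Q) := by abel
        _ = _ := by rw [h2, zero_add]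

def cut (s t : E → V) (S : Finset V) : Finset E :=
  Finset.univ.filter fun e => ¬ (s e ∈ S ↔ t e ∈ S)

theorem sum_bdry (φ : E → A) (S : Finset V) : ∑ v ∈ S, bdry s t φ v =
    ∑ e, ((if s e ∈ S then φ e else 0) + (if t e ∈ S then φ e else 0)) := by
  unfold bdry
  rw [Finset.sum_comm]
  refine Finset.sum_congr rfl fun e _ => ?_
  rw [Finset.sum_add_distrib]
  simp

theorem sum_bdry_cut (h2 : ∀ a : A, a + a = 0) (φ : E → A) (S : Finset V) :
    ∑ v ∈ S, bdry s t φ v = ∑ e ∈ cut s t S, φ e := by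
  rw [sum_bdry, cut, Finset.sum_filter]
  refine Finset.sum_congr rfl fun e _ => ?_
  by_cases h1 : s e ∈ S <;> by_cases h3 : t e ∈ S <;> simp [h1, h3, h2]

end

abbrev K2 := ZMod 2 × ZMod 2

theorem K2_two : ∀ a : K2, a + a = 0 := by decide
theorem Z2_two : ∀ a : ZMod 2, a + a = 0 := by decide
theorem K2_split : ∀ c : K2, ∃ p q : K2, p ≠ 0 ∧ q ≠ 0 ∧ c + p + q = 0 := by decide

section
variable {V E : Type*} [DecidableEq V] [DecidableEq E] [Fintype E] {s t : E → V}

/-- correct the boundary on a trail -/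
theorem fix_bdry {A : Type*} [AddCommGroup A] (h2 : ∀ a : A, a + a = 0) {x : V} (F : Finset E)
    (W : Finset V) (h : ∀ w ∈ W, ∃ F' W', Trail s t x w F' W' ∧ F' ⊆ F) (b : V → A)
    (hb : ∑ w ∈ W, b w = 0) : ∃ z : E → A, (∀ e, e ∉ F → z e = 0) ∧
    ∀ v, bdry s t z v = if v ∈ W then b v else 0 := by
  classical
  choose! F' W' hT hF using h
  refine ⟨fun e => ∑ w ∈ W, if e ∈ F' w then b w else 0, ?_, ?_⟩
  · intro e he
    refine Finset.sum_eq_zero fun w hw => ?_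
    rw [if_neg fun h => he (hF w hw h)]
  · intro v
    rw [bdry_sum W (fun w e => if e ∈ F' w then b w else 0)]
    rw [Finset.sum_congr rfl fun w hw => (hT w hw).bdry h2 (b w) v]
    rw [Finset.sum_add_distrib]
    have : ∑ w ∈ W, (if x = v then b w else 0) = 0 := by
      split_ifs
      · exact hb
      · simp
    rw [this]
    simp

theorem exists_min_set [Fintype V] (U : Finset V) (hU : (Uᶜ).Nonempty)
    (h3 : ∀ S : Finset V, S.Nonempty → Sᶜ.Nonempty → 3 ≤ (cut s t S).card) (hU0 : U.Nonempty) :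
    ∃ S ⊆ Uᶜ, 2 ≤ (eb s t S U).card ∧
      ∀ A ⊆ S, A.Nonempty → (S \ A).Nonempty → 2 ≤ (eb s t A (S \ A)).card := by
  classical
  let I := (Uᶜ).powerset.filter fun S => S.Nonempty ∧ (eb s t S (Uᶜ \ S)).card ≤ 1
  have hI : I.Nonempty := ⟨Uᶜ, by
    simp only [I, Finset.mem_filter, Finset.mem_powerset]
    exact ⟨Finset.Subset.refl _, hU, by simp [eb]⟩⟩
  obtain ⟨S, hS, hmin⟩ := Finset.exists_min_image I Finset.card hI
  simp only [I, Finset.mem_filter, Finset.mem_powerset] at hS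
  obtain ⟨hSU, hSn, hS1⟩ := hS
  have hS2 : S ∩ U = ∅ := by
    ext a; have := @hSU a; simp at this ⊢; exact this
  refine ⟨S, hSU, ?_, ?_⟩
  · have hc := h3 S hSn (by
      obtain ⟨u, hu⟩ := hU0
      refine ⟨u, Finset.mem_compl.2 fun h => ?_⟩
      have := hSU h
      simp [hu] at this)
    have : cut s t S ⊆ eb s t S U ∪ eb s t S (Uᶜ \ S) := by
      intro e he
      simp only [cut, eb, Finset.mem_filter, Finset.mem_univ, true_and, Finset.mem_union,
        Finset.mem_sdiff, Finset.mem_compl] at he ⊢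
      tauto
    have := (Finset.card_le_card this).trans (Finset.card_union_le _ _)
    omega
  · intro A hA hAn hBn
    by_contra hlt
    have key : ∀ B ⊆ S, B.Nonempty → (S \ B).Nonempty → (eb s t B (S \ B)).card ≤ 1 →
        (eb s t B (Uᶜ \ S)).Nonempty := by
      intro B hB hB0 hB1 hB2
      by_contra hne
      rw [Finset.not_nonempty_iff_eq_empty] at hne
      have hB3 : eb s t B (Uᶜ \ B) ⊆ eb s t B (S \ B) ∪ eb s t B (Uᶜ \ S) := by
        intro e he
        simp only [eb, Finset.mem_filter, Finset.mem_univ, true_and, Finset.mem_union,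
          Finset.mem_sdiff, Finset.mem_compl] at he ⊢
        tauto
      rw [hne, Finset.union_empty] at hB3
      have h4 := hmin B (by
        simp only [I, Finset.mem_filter, Finset.mem_powerset]
        exact ⟨hB.trans hSU, hB0, (Finset.card_le_card hB3).trans hB2⟩)
      have := Finset.card_sdiff_add_card_eq_card hB
      have := Finset.card_pos.2 hB1
      omega
    have hAA : S \ (S \ A) = A := Finset.sdiff_sdiff_eq_self hA
    have hsym : eb s t (S \ A) A = eb s t A (S \ A) := by
      ext e; simp only [eb, Finset.mem_filter, Finset.mem_univ, true_and]; tauto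
    obtain ⟨e, he⟩ := key A hA hAn hBn (by omega)
    obtain ⟨f, hf⟩ := key (S \ A) Finset.sdiff_subset hBn (by rwa [hAA]) (by
      rw [hAA, hsym]; omega)
    have hef : e ≠ f := by
      rintro rfl
      simp only [eb, Finset.mem_filter, Finset.mem_univ, true_and,
          Finset.mem_sdiff, Finset.mem_compl] at he hf
      have := @hA (s e)
      have := @hA (t e)
      tauto
    have hsub : ({e, f} : Finset E) ⊆ eb s t S (Uᶜ \ S) := by
      intro g hg
      simp only [Finset.mem_insert, Finset.mem_singleton] at hg
      simp only [eb, Finset.mem_filter, Finset.mem_univ, true_and,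
          Finset.mem_sdiff, Finset.mem_compl] at he hf ⊢
      rcases hg with rfl | rfl
      · have := @hA (s g)
        have := @hA (t g)
        tauto
      · tauto
    have := Finset.card_le_card hsub
    rw [Finset.card_pair hef] at this
    omega

def Good (s t : E → V) (U : Finset V) : Prop :=
  ∃ (x : E → ZMod 2) (y : E → K2), (∀ v, v ∉ U → bdry s t x v = 0 ∧ bdry s t y v = 0) ∧
    (∀ e, (s e ∈ U ∨ t e ∈ U) → x e = 0) ∧
    ∀ e, ¬ (s e ∈ U ∧ t e ∈ U) → x e ≠ 0 ∨ y e ≠ 0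

theorem good_step (U S : Finset V) (hSU : Disjoint S U) {x y : V} {F F2 : Finset E}
    {W W2 : Finset V} (hP : Trail s t x y F W) (hR : Trail s t x y F2 W2) (hd : Disjoint F F2)
    (hW : W ⊆ S) (hW2 : W2 ⊆ S) {e f : E} (hef : e ≠ f) {u u' : V} (hu : u ∈ U) (hu' : u' ∈ U)
    (he : Joins s t e x u) (hf : Joins s t f y u') (hg : Good s t (U ∪ (W ∪ W2))) :
    Good s t U := by
  classical
  obtain ⟨x', y', h1, h2, h3⟩ := hg
  set D := W ∪ W2 with hD
  have hDS : D ⊆ S := Finset.union_subset hW hW2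
  have hDU : ∀ v ∈ D, v ∉ U := fun v hv hvU => Finset.disjoint_left.1 hSU (hDS hv) hvU
  have hends : ∀ g, (g ∈ F ∨ g ∈ F2) → s g ∈ D ∧ t g ∈ D := by
    rintro g (hg | hg)
    · exact ⟨Finset.mem_union_left _ (hP.ends g hg).1, Finset.mem_union_left _ (hP.ends g hg).2⟩
    · exact ⟨Finset.mem_union_right _ (hR.ends g hg).1, Finset.mem_union_right _ (hR.ends g hg).2⟩
  have hxD : x ∈ D := Finset.mem_union_left _ hP.start_mem
  have hyD : y ∈ D := Finset.mem_union_left _ hP.end_mem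
  let y0 : E → K2 := fun g => if g = e ∨ g = f then 0 else
    if s g ∈ U ∪ D ∧ t g ∈ U ∪ D then (1, 1) else y' g
  obtain ⟨p, q, hp, hq, hpq⟩ := K2_split (∑ w ∈ D, bdry s t y0 w)
  let y1 : E → K2 := fun g => (y0 g + if g = e then p else 0) + if g = f then q else 0
  have hsum : ∀ (g : E) (a b : V) (c : K2), a ∈ D → b ∈ U → Joins s t g a b →
      ∑ w ∈ D, ((if s g = w then c else 0) + (if t g = w then c else 0)) = c := by
    intro g a b c ha hb hj
    have hbD : b ∉ D := fun h => hDU b h hb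
    rw [Finset.sum_add_distrib]
    rcases hj with ⟨h, h'⟩ | ⟨h, h'⟩ <;> rw [h, h'] <;> simp [ha, hbD]
  have hy1 : ∑ w ∈ D, bdry s t y1 w = 0 := by
    have : ∀ w, bdry s t y1 w = (bdry s t y0 w + ((if s e = w then p else 0) +
        (if t e = w then p else 0))) + ((if s f = w then q else 0) + (if t f = w then q else 0)) := by
      intro w
      rw [← bdry_single e p w, ← bdry_single f q w, ← bdry_add, ← bdry_add]
    simp only [this]
    rw [Finset.sum_add_distrib, Finset.sum_add_distrib, hsum e x u p hxD hu he,
      hsum f y u' q hyD hu' hf, hpq]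
  obtain ⟨z, hz0, hz⟩ := fix_bdry (s := s) (t := t) K2_two (x := x) (F ∪ F2) D (by
    intro w hw
    rcases Finset.mem_union.1 hw with h | h
    · obtain ⟨F', W', a, b, -⟩ := hP.pre w h
      exact ⟨F', W', a, b.trans Finset.subset_union_left⟩
    · obtain ⟨F', W', a, b, -⟩ := hR.pre w h
      exact ⟨F', W', a, b.trans Finset.subset_union_right⟩) (bdry s t y1) hy1
  refine ⟨fun g => (x' g + if g ∈ F then 1 else 0) + if g ∈ F2 then 1 else 0,
    fun g => y1 g + z g, ?_, ?_, ?_⟩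
  · intro v hv
    constructor
    · rw [bdry_add, bdry_add, hP.bdry Z2_two, hR.bdry Z2_two, add_assoc, Z2_two, add_zero]
      by_cases hvD : v ∈ D
      · rw [bdry_congr x' (fun _ => 0)]
        · simp [bdry]
        · intro g hg
          apply h2
          rcases hg with rfl | rfl
          · exact .inl (Finset.mem_union_right _ hvD)
          · exact .inr (Finset.mem_union_right _ hvD)
      · exact (h1 v (by simp [hv, hvD])).1
    · rw [bdry_add, hz]
      split_ifs with hvD
      · exact K2_two _
      · rw [add_zero, ← (h1 v (by simp [hv, hvD])).2]
        apply bdry_congr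
        intro g hg
        have hvUD : v ∉ U ∪ D := by simp [hv, hvD]
        have hgn : ¬ (s g ∈ U ∪ D ∧ t g ∈ U ∪ D) := by
          rintro ⟨a, b⟩
          rcases hg with rfl | rfl <;> contradiction
        have hjn : ∀ a b, a ∈ D → b ∈ U → ¬ Joins s t g a b := by
          rintro a b ha hb hj
          apply hgn
          rcases hj with ⟨rfl, rfl⟩ | ⟨rfl, rfl⟩ <;> simp [ha, hb]
        have hge : g ≠ e := by rintro rfl; exact hjn _ _ hxD hu he
        have hgf : g ≠ f := by rintro rfl; exact hjn _ _ hyD hu' hf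
        simp only [y1, y0, hge, hgf, hgn, if_false, or_self, add_zero]
  · intro g hg
    have hgn : ¬ (g ∈ F ∨ g ∈ F2) := fun h => by
      have := hends g h
      rcases hg with h | h
      · exact hDU _ this.1 h
      · exact hDU _ this.2 h
    push Not at hgn
    simp only [hgn.1, hgn.2, if_false, add_zero]
    apply h2
    rcases hg with h | h
    · exact .inl (Finset.mem_union_left _ h)
    · exact .inr (Finset.mem_union_left _ h)
  · intro g hg
    by_cases hgP : g ∈ F ∨ g ∈ F2
    · left
      have hx0 : x' g = 0 := h2 g (.inl (Finset.mem_union_right _ (hends g hgP).1))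
      simp only [hx0]
      rcases hgP with h | h
      · have := Finset.disjoint_left.1 hd h
        simp [h, this]
      · have := Finset.disjoint_right.1 hd h
        simp [h, this]
    · have hzg : z g = 0 := hz0 g (by simpa using hgP)
      push Not at hgP
      simp only [hgP.1, hgP.2, if_false, add_zero, hzg, y1, y0]
      by_cases hge : g = e
      · right; subst hge; simp [hef, hp]
      · by_cases hgf : g = f
        · right; subst hgf; simp [hge, hq]
        · simp only [hge, hgf, or_self, if_false, add_zero]
          split_ifs with hin
          · right; simp
          · exact h3 g hin

theorem good_all [Fintype V]
    (h3 : ∀ S : Finset V, S.Nonempty → Sᶜ.Nonempty → 3 ≤ (cut s t S).card) :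
    ∀ (n : ℕ) (U : Finset V), U.Nonempty → (Uᶜ).card = n → Good s t U := by
  intro n
  induction n using Nat.strong_induction_on with
  | _ n ih =>
    intro U hU hn
    by_cases hne : (Uᶜ).Nonempty
    · obtain ⟨S, hS, h2, hcon⟩ := exists_min_set U hne h3 hU
      obtain ⟨e, he, f, hf, hef⟩ := Finset.one_lt_card.1 (by omega : 1 < (eb s t S U).card)
      have hj : ∀ g ∈ eb s t S U, ∃ a b, a ∈ S ∧ b ∈ U ∧ Joins s t g a b := by
        intro g hg
        rcases (Finset.mem_filter.1 hg).2 with h | h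
        · exact ⟨_, _, h.1, h.2, .inl ⟨rfl, rfl⟩⟩
        · exact ⟨_, _, h.2, h.1, .inr ⟨rfl, rfl⟩⟩
      obtain ⟨x, u, hx, hu, hje⟩ := hj e he
      obtain ⟨y, u', hy, hu', hjf⟩ := hj f hf
      obtain ⟨F, W, F2, W2, hP, hR, hd, hW, hW2⟩ := menger2 S hcon hx hy
      have hSU : Disjoint S U := Finset.disjoint_left.2 fun a ha => Finset.mem_compl.1 (hS ha)
      refine good_step U S hSU hP hR hd hW hW2 hef hu hu' hje hjf (ih _ ?_ _ ?_ rfl)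
      · rw [← hn]
        apply Finset.card_lt_card
        refine Finset.ssubset_iff_of_subset ?_ |>.2 ⟨x, hS hx, ?_⟩
        · exact Finset.compl_subset_compl.2 Finset.subset_union_left
        · simp [hP.start_mem]
      · exact hU.mono Finset.subset_union_left
    · rw [Finset.not_nonempty_iff_eq_empty, Finset.compl_eq_empty_iff] at hne
      subst hne
      exact ⟨fun _ => 0, fun _ => 0, by simp, by simp, by simp⟩

abbrev K3 := ZMod 2 × K2
theorem K3_two : ∀ a : K3, a + a = 0 := by decide

theorem flow3 [Fintype V] [Nonempty V]
    (h3 : ∀ S : Finset V, S.Nonempty → Sᶜ.Nonempty → 3 ≤ (cut s t S).card) :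
    ∃ φ : E → K3, (∀ e, φ e ≠ 0) ∧ ∀ v, bdry s t φ v = 0 := by
  obtain ⟨u⟩ := ‹Nonempty V›
  obtain ⟨x, y, h1, -, hn⟩ := good_all h3 _ {u} (by simp) rfl
  let φ : E → K3 := fun e => if s e = u ∧ t e = u then (1, 1, 1) else (x e, y e)
  have hv : ∀ v, v ≠ u → bdry s t φ v = 0 := by
    intro v hvu
    rw [bdry_congr φ (fun e => (x e, y e))]
    · have := h1 v (by simpa using hvu)
      refine Prod.ext ?_ ?_
      · rw [Prod.fst_zero, ← this.1]
        simp only [bdry, Prod.fst_sum, Prod.fst_add, apply_ite Prod.fst, Prod.fst_zero]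
      · rw [Prod.snd_zero, ← this.2]
        simp only [bdry, Prod.snd_sum, Prod.snd_add, apply_ite Prod.snd, Prod.snd_zero]
    · intro e he
      have : ¬ (s e = u ∧ t e = u) := by
        rintro ⟨a, b⟩
        rcases he with h | h <;> exact hvu (by rw [← h]; assumption)
      simp only [φ, this, if_false]
  refine ⟨φ, ?_, ?_⟩
  · intro e
    by_cases h : s e = u ∧ t e = u
    · simp [φ, h]
    · have := hn e (by simpa using h)
      simp only [φ, h, if_false]
      intro h0
      simp only [Prod.mk_eq_zero] at h0
      have h00 : y e = 0 := Prod.ext (by rw [h0.2]) (by rw [h0.2])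
      rcases this with h | h
      · exact h h0.1
      · exact h h00
  · intro v
    by_cases hvu : v = u
    · have := sum_bdry_cut (s := s) (t := t) K3_two φ Finset.univ
      rw [show cut s t Finset.univ = ∅ by simp [cut], Finset.sum_empty,
        Finset.sum_eq_single u (fun b _ hb => hv b hb) (by simp)] at this
      rw [hvu, this]
    · exact hv v hvu

end

universe u w

theorem flow8 {E : Type w} [DecidableEq E] [Fintype E] (n : ℕ) : ∀ (V : Type u) [DecidableEq V]
    [Fintype V] (s t : E → V), Fintype.card V = n → (∀ S : Finset V, (cut s t S).card ≠ 1) →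
    ∃ φ : E → K3, (∀ e, φ e ≠ 0) ∧ ∀ v, bdry s t φ v = 0 := by
  induction n with
  | zero =>
    intro V _ _ s t hV _
    have : IsEmpty V := Fintype.card_eq_zero_iff.1 hV
    exact ⟨fun _ => (1, 1, 1), by simp, fun v => this.elim v⟩
  | succ n ih =>
    intro V _ _ s t hV hc
    have hne : Nonempty V := Fintype.card_pos_iff.1 (by omega)
    by_cases h3 : ∀ S : Finset V, S.Nonempty → Sᶜ.Nonempty → 3 ≤ (cut s t S).card
    · exact flow3 h3
    push Not at h3
    obtain ⟨S, hS, hS', hlt⟩ := h3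
    have main : ∀ u v, u ∈ S → v ∉ S → (∃ φ : E → K3, (∀ e, φ e ≠ 0) ∧
        ∀ (φ' : E → K3), (∀ e, ¬ Joins s t e u v → φ' e = φ e) → ∑ e ∈ cut s t S, φ' e = 0 →
        ∀ v, bdry s t φ' v = 0) := by
      intro u v hu hv
      have huv : u ≠ v := by rintro rfl; exact hv hu
      let π : V → {w : V // w ≠ v} := fun w => if h : w = v then ⟨u, huv⟩ else ⟨w, h⟩
      have hπu : π u = ⟨u, huv⟩ := by simp [π, huv]
      have hπv : π v = ⟨u, huv⟩ := by simp [π]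
      have hπ : ∀ w (h : w ≠ v), π w = ⟨w, h⟩ := fun w h => by simp [π, h]
      obtain ⟨φ, hφ, hb⟩ := ih {w : V // w ≠ v} (π ∘ s) (π ∘ t)
        (by rw [Fintype.card_subtype_compl]; simp [hV]) (by
          intro T
          have := hc (Finset.univ.filter fun w => π w ∈ T)
          simpa [cut] using this)
      refine ⟨φ, hφ, fun φ' hφ' hsum => ?_⟩
      have hb' : ∀ w', ∑ w ∈ Finset.univ.filter (fun w => π w = w'), bdry s t φ' w = 0 := by
        intro w'
        refine Eq.trans ?_ (hb w')
        rw [sum_bdry, bdry]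
        refine Finset.sum_congr rfl fun e _ => ?_
        simp only [Finset.mem_filter, Finset.mem_univ, true_and, Function.comp]
        by_cases hj : Joins s t e u v
        · have : π (s e) = π (t e) := by
            rcases hj with ⟨a, b⟩ | ⟨a, b⟩ <;> rw [a, b, hπu, hπv]
          simp only [this, K3_two]
        · rw [hφ' e hj]
      have h1 : ∀ w, w ≠ u → w ≠ v → bdry s t φ' w = 0 := by
        intro w hwu hwv
        rw [← hb' ⟨w, hwv⟩]
        rw [show Finset.univ.filter (fun z => π z = ⟨w, hwv⟩) = {w} from ?_, Finset.sum_singleton]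
        ext z
        simp only [Finset.mem_filter, Finset.mem_univ, true_and, Finset.mem_singleton]
        by_cases hz : z = v
        · subst hz; simp [hπv, Ne.symm hwu, Ne.symm hwv]
        · simp [hπ z hz]
      have h2 : bdry s t φ' u + bdry s t φ' v = 0 := by
        rw [← hb' ⟨u, huv⟩]
        rw [show Finset.univ.filter (fun z => π z = ⟨u, huv⟩) = {u, v} from ?_,
          Finset.sum_pair huv]
        ext z
        simp only [Finset.mem_filter, Finset.mem_univ, true_and, Finset.mem_insert,
          Finset.mem_singleton]
        by_cases hz : z = v
        · subst hz; simp [hπv]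
        · simp [hπ z hz, hz]
      have h4 : bdry s t φ' u = 0 := by
        rw [← sum_bdry_cut K3_two, Finset.sum_eq_single u] at hsum
        · exact hsum
        · intro b hbS hbu
          exact h1 b hbu (by rintro rfl; exact hv hbS)
        · exact fun h => absurd hu h
      have h5 : bdry s t φ' v = 0 := by rwa [h4, zero_add] at h2
      intro w
      by_cases hwu : w = u
      · rw [hwu, h4]
      by_cases hwv : w = v
      · rw [hwv, h5]
      exact h1 w hwu hwv
    have h1 := hc S
    rcases (by omega : (cut s t S).card = 0 ∨ (cut s t S).card = 2) with h | h
    · obtain ⟨u, hu⟩ := hS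
      obtain ⟨v, hv⟩ := hS'
      obtain ⟨φ, hφ, hm⟩ := main u v hu (Finset.mem_compl.1 hv)
      refine ⟨φ, hφ, hm φ (fun _ _ => rfl) ?_⟩
      rw [Finset.card_eq_zero.1 h, Finset.sum_empty]
    · obtain ⟨e, f, hef, hcut⟩ := Finset.card_eq_two.1 h
      have he : e ∈ cut s t S := by rw [hcut]; simp
      obtain ⟨u, v, hu, hv, hj⟩ : ∃ u v, u ∈ S ∧ v ∉ S ∧ Joins s t e u v := by
        have := (Finset.mem_filter.1 he).2
        by_cases hs : s e ∈ S
        · exact ⟨_, _, hs, fun h => this (by simp [hs, h]), .inl ⟨rfl, rfl⟩⟩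
        · exact ⟨t e, s e, by_contra fun h => this (by simp [hs, h]), hs, .inr ⟨rfl, rfl⟩⟩
      obtain ⟨φ, hφ, hm⟩ := main u v hu hv
      refine ⟨Function.update φ e (φ f), ?_, hm _ ?_ ?_⟩
      · intro g
        by_cases hg : g = e
        · subst hg; simp [hφ]
        · simp [hg, hφ]
      · intro g hg
        have : g ≠ e := by rintro rfl; exact hg hj
        simp [this]
      · rw [hcut, Finset.sum_pair hef]
        simp [hef.symm, K3_two]

def colF (a : K3) : Fin 7 := Fin.ofNat 7 (4 * a.1.val + 2 * a.2.1.val + a.2.2.val)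

theorem colF_inj : ∀ a b : K3, a ≠ 0 → b ≠ 0 → colF a = colF b → a = b := by decide

def colU (A B C : K3) : Finset (Fin 7) :=
  {colF A, colF B, colF (A + B)} ∪ {colF A, colF C, colF (A + C)}

theorem colF_card_aux : ∀ A B C : K3, (A = 0 ∨ B = 0 ∨ A = B ∨ C = 0 ∨ A = C) ∨
    ((colU A B C).card = 3 ∨ (colU A B C).card = 5) := by
  decide +kernel

theorem colF_card (A B C : K3) (hA : A ≠ 0) (hB : B ≠ 0) (hAB : A ≠ B) (hC : C ≠ 0)
    (hAC : A ≠ C) : (colU A B C).card = 3 ∨ (colU A B C).card = 5 := by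
  have := colF_card_aux A B C
  tauto

theorem K3_third : ∀ A B C : K3, A + B + C = 0 → C = A + B := by decide +kernel

theorem exists_flow {V : Type*} [Fintype V] (G : SimpleGraph V) (hbl : Bridgeless G) :
    ∃ θ : Sym2 V → K3, (∀ e ∈ G.edgeSet, θ e ≠ 0) ∧
      ∀ v a b c, a ≠ b → a ≠ c → b ≠ c → (∀ w, G.Adj v w ↔ w = a ∨ w = b ∨ w = c) →
      θ s(v, a) + θ s(v, b) + θ s(v, c) = 0 := by
  classical
  let s : G.edgeSet → V := fun e => (Quot.out e.1).1
  let t : G.edgeSet → V := fun e => (Quot.out e.1).2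
  have hst : ∀ e, s(s e, t e) = e.1 := fun e => Quot.out_eq e.1
  have hadj : ∀ e, G.Adj (s e) (t e) := fun e => by
    rw [← SimpleGraph.mem_edgeSet, hst]; exact e.2
  obtain ⟨φ, hφ, hb⟩ := flow8 _ V s t rfl (by
    intro S hS
    obtain ⟨e, he⟩ := Finset.card_eq_one.1 hS
    have heS : e ∈ cut s t S := by rw [he]; simp
    obtain ⟨u, v, hu, hv, huv⟩ : ∃ u v, u ∈ S ∧ v ∉ S ∧ e.1 = s(u, v) := by
      have := (Finset.mem_filter.1 heS).2
      by_cases hs : s e ∈ S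
      · exact ⟨_, _, hs, fun h => this (by simp [hs, h]), (hst e).symm⟩
      · exact ⟨t e, s e, by_contra fun h => this (by simp [hs, h]), hs, by
          rw [← hst e, Sym2.eq_swap]⟩
    have hnb := hbl e.1 e.2
    rw [huv, SimpleGraph.isBridge_iff, not_not] at hnb
    obtain ⟨p⟩ := hnb
    obtain ⟨d, -, hd1, hd2⟩ := p.exists_boundary_dart (S : Set V) (by simpa) (by simpa)
    have hd := d.adj
    rw [SimpleGraph.deleteEdges_adj] at hd
    have hmem : (⟨s(d.fst, d.snd), hd.1⟩ : G.edgeSet) ∈ cut s t S := by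
      simp only [cut, Finset.mem_filter, Finset.mem_univ, true_and]
      have h1 := hst ⟨s(d.fst, d.snd), hd.1⟩
      simp only [Sym2.eq_iff] at h1
      simp only [Finset.mem_coe] at hd1 hd2
      rcases h1 with ⟨a, b⟩ | ⟨a, b⟩ <;> rw [a, b] <;> simp [hd1, hd2]
    rw [he, Finset.mem_singleton] at hmem
    apply hd.2
    exact Set.mem_singleton_iff.2 ((congrArg Subtype.val hmem).trans huv))
  let θ : Sym2 V → K3 := fun e => if h : e ∈ G.edgeSet then φ ⟨e, h⟩ else 0
  refine ⟨θ, fun e he => ?_, ?_⟩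
  · simp only [θ, he, dif_pos]; exact hφ _
  · intro v a b c hab hac hbc hN
    rw [← hb v]
    have h1 : bdry s t φ v = ∑ e : G.edgeSet, (fun e : Sym2 V => if v ∈ e then θ e else 0) e.1 := by
      unfold bdry
      refine Finset.sum_congr rfl fun e _ => ?_
      have hθ : θ e.1 = φ e := by simp [θ]
      have hne := (hadj e).ne
      have : v ∈ e.1 ↔ v = s e ∨ v = t e := by rw [← hst e, Sym2.mem_iff]
      simp only [this, hθ]
      by_cases h1 : s e = v
      · have h2 : t e ≠ v := by rw [← h1]; exact hne.symm
        simp [h1, h2]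
      · by_cases h2 : t e = v
        · simp [h1, h2]
        · simp [h1, h2, Ne.symm h1, Ne.symm h2]
    have hsub : ({s(v, a), s(v, b), s(v, c)} : Finset (Sym2 V)) ⊆ G.edgeFinset := by
      intro e he
      simp only [Finset.mem_insert, Finset.mem_singleton] at he
      rw [SimpleGraph.mem_edgeFinset]
      rcases he with rfl | rfl | rfl <;> rw [SimpleGraph.mem_edgeSet, hN] <;> simp
    rw [h1, ← Finset.sum_subtype G.edgeFinset (fun x => SimpleGraph.mem_edgeFinset)
      (fun e : Sym2 V => if v ∈ e then θ e else 0), ← Finset.sum_subset hsub]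
    · rw [Finset.sum_insert, Finset.sum_pair]
      · simp [add_assoc]
      · exact fun h => hbc (Sym2.congr_right.1 h)
      · simp only [Finset.mem_insert, Finset.mem_singleton, Sym2.congr_right]
        tauto
    · intro e he hn
      rw [if_neg]
      intro hve
      obtain ⟨w, rfl⟩ := Sym2.mem_iff_exists.1 hve
      rw [SimpleGraph.mem_edgeFinset, SimpleGraph.mem_edgeSet, hN] at he
      apply hn
      rcases he with rfl | rfl | rfl <;> simp

theorem stmt_9 {V : Type*} [Fintype V] (G : SimpleGraph V)
    (hG : IsCubic G) (hbl : Bridgeless G) :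
    ∃ c : Sym2 V → Fin 7, IsNormalEdgeColoring G c := by
  classical
  obtain ⟨θ, h0, hθ⟩ := exists_flow G hbl
  have key : ∀ v a, G.Adj v a → ∃ b c, a ≠ b ∧ a ≠ c ∧ b ≠ c ∧
      (∀ w, G.Adj v w ↔ w = a ∨ w = b ∨ w = c) := by
    intro v a hva
    obtain ⟨x, y, z, hxy, hxz, hyz, hN⟩ := Set.ncard_eq_three.1 (hG v)
    have hN' : ∀ w, G.Adj v w ↔ w = x ∨ w = y ∨ w = z := fun w => by
      rw [← SimpleGraph.mem_neighborSet, hN]; simp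
    rcases (hN' a).1 hva with rfl | rfl | rfl
    · exact ⟨y, z, hxy, hxz, hyz, hN'⟩
    · exact ⟨x, z, hxy.symm, hyz, hxz, fun w => by rw [hN']; tauto⟩
    · exact ⟨x, y, hxz.symm, hyz.symm, hxy, fun w => by rw [hN']; tauto⟩
  have key2 : ∀ v a, G.Adj v a → ∃ b c, G.Adj v b ∧ (∀ w, G.Adj v w ↔ w = a ∨ w = b ∨ w = c) ∧
      θ s(v, a) ≠ 0 ∧ θ s(v, b) ≠ 0 ∧ θ s(v, a) ≠ θ s(v, b) ∧ θ s(v, a) ≠ θ s(v, c) ∧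
      θ s(v, c) = θ s(v, a) + θ s(v, b) := by
    intro v a hva
    obtain ⟨b, c, hab, hac, hbc, hN⟩ := key v a hva
    have hb : G.Adj v b := (hN b).2 (by simp)
    have hc : G.Adj v c := (hN c).2 (by simp)
    have hs := K3_third _ _ _ (hθ v a b c hab hac hbc hN)
    have ha0 := h0 s(v, a) hva
    have hb0 := h0 s(v, b) hb
    have hc0 := h0 s(v, c) hc
    refine ⟨b, c, hb, hN, ha0, hb0, ?_, ?_, hs⟩
    · intro h; rw [h, K3_two] at hs; exact hc0 hs
    · intro h; rw [← h] at hs; exact hb0 (by simpa using hs)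
  refine ⟨fun e => colF (θ e), ?_, ?_⟩
  · rintro e he f hf hef ⟨v, hve, hvf⟩ heq
    have heq := colF_inj _ _ (h0 e he) (h0 f hf) heq
    obtain ⟨a, rfl⟩ := Sym2.mem_iff_exists.1 hve
    obtain ⟨b', rfl⟩ := Sym2.mem_iff_exists.1 hvf
    obtain ⟨b, c, -, hN, -, -, h1, h2, -⟩ := key2 v a he
    rcases (hN b').1 hf with rfl | rfl | rfl
    · exact hef rfl
    · exact h1 heq
    · exact h2 heq
  · have hcs : ∀ v a, G.Adj v a → ∃ B : K3, B ≠ 0 ∧ θ s(v, a) ≠ B ∧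
        colorSet G (fun e => colF (θ e)) v = ({colF (θ s(v, a)), colF B, colF (θ s(v, a) + B)} :
          Finset (Fin 7)) := by
      intro v a hva
      obtain ⟨b, c, hb, hN, -, hb0, h1, -, h3⟩ := key2 v a hva
      refine ⟨θ s(v, b), hb0, h1, ?_⟩
      rw [← h3]
      ext k
      simp only [colorSet, Set.mem_image, Finset.coe_insert, Finset.coe_singleton,
        Set.mem_insert_iff, Set.mem_singleton_iff]
      constructor
      · rintro ⟨e, ⟨he, hve⟩, rfl⟩
        obtain ⟨w, rfl⟩ := Sym2.mem_iff_exists.1 hve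
        rcases (hN w).1 he with rfl | rfl | rfl <;> simp
      · have hm : ∀ w, w = a ∨ w = b ∨ w = c → s(v, w) ∈ G.incidenceSet v := fun w hw =>
          ⟨(hN w).2 hw, by simp⟩
        rintro (rfl | rfl | rfl)
        · exact ⟨_, hm a (by simp), rfl⟩
        · exact ⟨_, hm b (by simp), rfl⟩
        · exact ⟨_, hm c (by simp), rfl⟩
    intro u v huv
    obtain ⟨B, hB0, hAB, hu⟩ := hcs u v huv
    obtain ⟨C, hC0, hAC, hv⟩ := hcs v u huv.symm
    rw [Sym2.eq_swap] at hAC hv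
    unfold IsPoorAt IsRichAt
    rw [hu, hv, ← Finset.coe_union, Set.ncard_coe_finset]
    exact colF_card _ _ _ (h0 _ huv) hB0 hAB hC0 hAC
end
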